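/- arXiv:2407.17680 — 3 statements merged into one kernel-verified Lean document; each statement's English description precedes it below -/
import Mathlib

section
/- Let a, b be integers with b ≠ 0 and a² − 4b ≠ 0, and let p > 3 be a prime with p ∣ b and p ∤ a. Let d be a nonzero squarefree integer (of either sign) dividing a² − 4b with gcd(d, (a²−4b)/d) = 1. Then the equation z² = d·u⁴ − 2a·u²v² + ((a²−4b)/d)·v⁴ has no solution (z,u,v) ∈ ℚ_p³ with (u,v) ≠ (0,0) if and only if both of the following hold: (i) the Legendre symbol (d/p) = −1, and (ii) ν_p(b) is odd or (a/p) = 1. -/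
/-- The homogeneous space `z² = d·u⁴ − 2a·u²v² + ((a²−4b)/d)·v⁴` has no nontrivial
`ℚ_p`-point. -/
def NoLocalSolution (p : ℕ) [Fact p.Prime] (a b d : ℤ) : Prop :=
  ¬ ∃ z u v : ℚ_[p], (u, v) ≠ (0, 0) ∧
    z ^ 2 = (d : ℚ_[p]) * u ^ 4 - 2 * (a : ℚ_[p]) * u ^ 2 * v ^ 2 +
      (((a ^ 2 - 4 * b) / d : ℤ) : ℚ_[p]) * v ^ 4

open Polynomial in
/-- Hensel: a `p`-adic integer that is a nonzero square mod `p` is a square. -/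
lemma aux_sqrt (p : ℕ) [Fact p.Prime] (hp3 : 3 < p) (x : ℤ_[p]) (y : ZMod p) (hy : y ≠ 0)
    (h : PadicInt.toZMod x = y ^ 2) : ∃ s : ℤ_[p], s ^ 2 = x := by
  obtain ⟨t, rfl⟩ := ZMod.ringHom_surjective (PadicInt.toZMod : ℤ_[p] →+* ZMod p) y
  have key : ∀ r : ℤ_[p], ‖r‖ < 1 ↔ PadicInt.toZMod r = 0 := by
    intro r
    rw [← RingHom.mem_ker, PadicInt.ker_toZMod, PadicInt.maximalIdeal_eq_span_p,
      Ideal.mem_span_singleton, PadicInt.norm_lt_one_iff_dvd]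
  have h2 : (2 : ZMod p) ≠ 0 := by
    have : ((2 : ℕ) : ZMod p) ≠ 0 := by
      rw [Ne, ZMod.natCast_eq_zero_iff]
      exact fun hh => by have := Nat.le_of_dvd (by norm_num) hh; omega
    exact_mod_cast this
  have hd : ‖2 * t‖ = 1 := by
    refine le_antisymm (PadicInt.norm_le_one _) (not_lt.1 fun hlt => ?_)
    rw [key, map_mul, map_ofNat] at hlt
    exact mul_ne_zero h2 hy hlt
  have hF : ‖t ^ 2 - x‖ < 1 := by
    rw [key, map_sub, map_pow, h, sub_self]
  obtain ⟨z, hz, -⟩ := hensels_lemma (p := p) (F := (X ^ 2 - C x : ℤ_[p][X])) (a := t) (by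
    simp [one_add_one_eq_two]
    rw [← norm_mul, hd]; simpa using hF)
  refine ⟨z, ?_⟩
  simpa [sub_eq_zero] using hz

lemma aux_key (p : ℕ) [Fact p.Prime] (r : ℤ_[p]) : ‖r‖ < 1 ↔ PadicInt.toZMod r = 0 := by
  rw [← RingHom.mem_ker, PadicInt.ker_toZMod, PadicInt.maximalIdeal_eq_span_p,
    Ideal.mem_span_singleton, PadicInt.norm_lt_one_iff_dvd]

open Polynomial in
lemma aux_rep (p : ℕ) [Fact p.Prime] (hp3 : 3 < p) (c d : ℤ) (hc : (c : ZMod p) ≠ 0)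
    (hd : (d : ZMod p) ≠ 0) :
    ∃ (w : ℤ_[p]) (z : ℚ_[p]), (w : ℚ_[p]) ^ 2 - d * z ^ 2 = c := by
  have hdq : (d : ℚ_[p]) ≠ 0 := by
    intro h
    have : d = 0 := by exact_mod_cast h
    simp [this] at hd
  obtain ⟨x, y, hxy⟩ : ∃ x y : ZMod p, x ^ 2 - d * y ^ 2 = c := by
    obtain ⟨x, y, h⟩ := FiniteField.exists_root_sum_quadratic (R := ZMod p)
      (f := X ^ 2 - C (c : ZMod p)) (g := C (-(d : ZMod p)) * X ^ 2)
      (degree_X_pow_sub_C (by decide) _) (degree_C_mul_X_pow 2 (neg_ne_zero.2 hd)) (by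
        rw [ZMod.card]
        exact (Fact.out : p.Prime).eq_two_or_odd.resolve_left (by omega))
    refine ⟨x, y, ?_⟩
    simp at h
    linear_combination h
  by_cases hy : y = 0
  · subst hy
    have hx : x ≠ 0 := by rintro rfl; apply hc; rw [← hxy]; ring
    obtain ⟨s, hs⟩ := aux_sqrt p hp3 (c : ℤ_[p]) x hx (by simp [← hxy])
    refine ⟨s, 0, ?_⟩
    have : ((s ^ 2 : ℤ_[p]) : ℚ_[p]) = ((c : ℤ_[p]) : ℚ_[p]) := by rw [hs]
    push_cast at this
    rw [this]; ring
  · obtain ⟨t, rfl⟩ := ZMod.ringHom_surjective (PadicInt.toZMod : ℤ_[p] →+* ZMod p) x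
    obtain ⟨s, hs⟩ := aux_sqrt p hp3 (d * (t ^ 2 - c)) (d * y) (mul_ne_zero hd hy) (by
      simp [← hxy]; ring)
    refine ⟨t, s / d, ?_⟩
    have : ((s ^ 2 : ℤ_[p]) : ℚ_[p]) = ((d * (t ^ 2 - c) : ℤ_[p]) : ℚ_[p]) := by rw [hs]
    push_cast at this
    field_simp
    rw [this]; ring

/-- The unramified norm form is anisotropic. -/
lemma aux_norm (p : ℕ) [Fact p.Prime] (d : ℤ) (hd : ¬ IsSquare (d : ZMod p)) (x y : ℚ_[p]) :
    ‖x ^ 2 - d * y ^ 2‖ = (max ‖x‖ ‖y‖) ^ 2 := by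
  have hdn : ‖(d : ℚ_[p])‖ = 1 := by
    refine le_antisymm (Padic.norm_int_le_one d) (not_lt.1 fun hlt => hd ?_)
    rw [Padic.norm_intCast_lt_one_iff, ← ZMod.intCast_zmod_eq_zero_iff_dvd] at hlt
    rw [hlt]; exact ⟨0, by simp⟩
  rcases lt_or_ge ‖y‖ ‖x‖ with h | h
  · have hlt : ‖-((d : ℚ_[p]) * y ^ 2)‖ < ‖x ^ 2‖ := by
      rw [norm_neg, norm_mul, hdn, one_mul, norm_pow, norm_pow]
      exact pow_lt_pow_left₀ h (norm_nonneg _) (by norm_num)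
    rw [sub_eq_add_neg, Padic.add_eq_max_of_ne hlt.ne', max_eq_left hlt.le, max_eq_left h.le,
      norm_pow]
  · rw [max_eq_right h]
    by_cases hy : y = 0
    · subst hy
      have : x = 0 := by simpa using h
      simp [this]
    have hyn : 0 < ‖y‖ := norm_pos_iff.2 hy
    have ht : ‖x / y‖ ≤ 1 := by rw [norm_div]; exact (div_le_one hyn).2 h
    have e : x ^ 2 - d * y ^ 2 = ((x / y) ^ 2 - d) * y ^ 2 := by field_simp
    rw [e, norm_mul, norm_pow]
    have : ‖(x / y) ^ 2 - d‖ = 1 := by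
      set t : ℤ_[p] := ⟨x / y, ht⟩ with htt
      have h1 : ‖t ^ 2 - (d : ℤ_[p])‖ = 1 := by
        refine le_antisymm (PadicInt.norm_le_one _) (not_lt.1 fun hlt => hd ?_)
        rw [aux_key, map_sub, map_pow, map_intCast, sub_eq_zero] at hlt
        exact ⟨_, by rw [← hlt, sq]⟩
      rw [PadicInt.norm_def] at h1
      push_cast at h1
      exact h1
    rw [this, one_mul]

theorem local_insolubility_criterion (a b : ℤ) (hb : b ≠ 0) (hdisc : a ^ 2 - 4 * b ≠ 0)
    (p : ℕ) [Fact p.Prime] (hp3 : 3 < p) (hpb : (p : ℤ) ∣ b) (hpa : ¬ (p : ℤ) ∣ a)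
    (d : ℤ) (hd0 : d ≠ 0) (hdsf : Squarefree d) (hdd : d ∣ a ^ 2 - 4 * b)
    (hgcd : Int.gcd d ((a ^ 2 - 4 * b) / d) = 1) :
    NoLocalSolution p a b d ↔
      legendreSym p d = -1 ∧ (Odd (padicValInt p b) ∨ legendreSym p a = 1) := by
  obtain ⟨e, he⟩ := hdd
  have hdiv : (a ^ 2 - 4 * b) / d = e := by rw [he]; exact Int.mul_ediv_cancel_left e hd0
  have hp1 : p.Prime := Fact.out
  have hbz : (b : ZMod p) = 0 := (ZMod.intCast_zmod_eq_zero_iff_dvd b p).2 hpb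
  have haz : (a : ZMod p) ≠ 0 := fun h => hpa ((ZMod.intCast_zmod_eq_zero_iff_dvd a p).1 h)
  have hdz : (d : ZMod p) ≠ 0 := by
    intro h
    have : ((a ^ 2 - 4 * b : ℤ) : ZMod p) = ((d * e : ℤ) : ZMod p) := by rw [he]
    push_cast at this
    rw [hbz, h] at this
    apply haz
    simpa using this
  have hdq : (d : ℚ_[p]) ≠ 0 := by exact_mod_cast hd0
  have heq : (a : ℚ_[p]) ^ 2 - 4 * b = d * e := by exact_mod_cast he
  have h4n : ‖(4 : ℚ_[p])‖ = 1 := by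
    have : ‖((4 : ℤ) : ℚ_[p])‖ = 1 := by
      refine le_antisymm (Padic.norm_int_le_one 4) (not_lt.1 fun hlt => ?_)
      rw [Padic.norm_intCast_lt_one_iff] at hlt
      have h5 : p ∣ 2 ^ 2 := by exact_mod_cast hlt
      have := Nat.le_of_dvd (by norm_num) (hp1.dvd_of_dvd_pow h5)
      omega
    exact_mod_cast this
  have h4z : (4 : ZMod p) ≠ 0 := by
    intro h
    have h5 : ((4 : ℕ) : ZMod p) = 0 := by exact_mod_cast h
    rw [ZMod.natCast_eq_zero_iff] at h5
    have := Nat.le_of_dvd (by norm_num) (hp1.dvd_of_dvd_pow (show p ∣ 2 ^ 2 from h5))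
    omega
  unfold NoLocalSolution
  rw [hdiv]
  constructor
  · intro hno
    have hdm : legendreSym p d = -1 := by
      rcases legendreSym.eq_one_or_neg_one p hdz with h | h
      · exfalso
        rw [legendreSym.eq_one_iff p hdz] at h
        obtain ⟨r, hr⟩ := h
        obtain ⟨s, hs⟩ := aux_sqrt p hp3 (d : ℤ_[p]) r
          (by rintro rfl; simp at hr; exact hdz hr) (by rw [map_intCast, hr, sq])
        apply hno
        refine ⟨s, 1, 0, by simp, ?_⟩
        have : ((s ^ 2 : ℤ_[p]) : ℚ_[p]) = ((d : ℤ_[p]) : ℚ_[p]) := by rw [hs]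
        push_cast at this
        rw [this]; ring
      · exact h
    refine ⟨hdm, ?_⟩
    by_contra hcon
    push Not at hcon
    obtain ⟨hev, ha1⟩ := hcon
    rw [Nat.not_odd_iff_even] at hev
    obtain ⟨k, hk⟩ := hev
    have ham : legendreSym p a = -1 := (legendreSym.eq_one_or_neg_one p haz).resolve_left ha1
    have hkpos : k ≠ 0 := by
      rintro rfl
      rw [padicValInt.eq_zero_iff] at hk
      rcases hk with h | h | h
      · omega
      · exact hb h
      · exact h hpb
    obtain ⟨c, hc⟩ := padicValInt_dvd (p := p) b
    have hcz : (c : ZMod p) ≠ 0 := by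
      intro h
      rw [ZMod.intCast_zmod_eq_zero_iff_dvd] at h
      have h2 : (p : ℤ) ^ (padicValInt p b + 1) ∣ b := by
        obtain ⟨c', rfl⟩ := h
        exact ⟨c', by rw [pow_succ, mul_assoc]; exact hc⟩
      rw [padicValInt_dvd_iff] at h2
      rcases h2 with h2 | h2
      · exact hb h2
      · omega
    rw [hk] at hc
    obtain ⟨w0, z0, hwz⟩ := aux_rep p hp3 (4 * c) d (by push_cast; exact mul_ne_zero h4z hcz) hdz
    have hda : legendreSym p (d * a) = 1 := by rw [legendreSym.mul, hdm, ham]; norm_num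
    have hdaz : ((d * a : ℤ) : ZMod p) ≠ 0 := by push_cast; exact mul_ne_zero hdz haz
    rw [legendreSym.eq_one_iff p hdaz] at hda
    obtain ⟨r, hr⟩ := hda
    obtain ⟨t, ht⟩ := aux_sqrt p hp3 (d * (a + p ^ k * w0)) r
      (by rintro rfl; rw [mul_zero] at hr; exact hdaz hr)
      (by push_cast at hr; simp [hkpos, sq, hr])
    apply hno
    have ht' : ((t ^ 2 : ℤ_[p]) : ℚ_[p]) = ((d * (a + p ^ k * w0) : ℤ_[p]) : ℚ_[p]) := by rw [ht]
    push_cast at ht' hwz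
    have hcq : (b : ℚ_[p]) = p ^ (k + k) * c := by exact_mod_cast hc
    refine ⟨p ^ k * z0, t / d, 1, by simp, ?_⟩
    have hu : (d : ℚ_[p]) * (t / d) ^ 2 = a + p ^ k * w0 := by
      field_simp; rw [ht']
    generalize (t : ℚ_[p]) / d = u at hu
    apply mul_left_cancel₀ hdq
    rw [pow_add] at hcq
    linear_combination heq - (p : ℚ_[p]) ^ (2 * k) * hwz + 4 * hcq
      - (d * u ^ 2 - a + p ^ k * w0) * hu
  · rintro ⟨hdm, hor⟩ ⟨z, u, v, huv, h⟩
    have hns := (legendreSym.eq_neg_one_iff p).1 hdm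
    have hN := aux_norm p d hns (d * u ^ 2 - a * v ^ 2) z
    have hE : (d * u ^ 2 - a * v ^ 2) ^ 2 - d * z ^ 2 = 4 * (b : ℚ_[p]) * v ^ 4 := by
      rw [h]; linear_combination v ^ 4 * heq
    rw [hE, norm_mul, norm_mul, h4n, one_mul, norm_pow] at hN
    have hM0 : 0 ≤ max ‖(d : ℚ_[p]) * u ^ 2 - a * v ^ 2‖ ‖z‖ := le_max_of_le_right (norm_nonneg _)
    have hle : ‖(d : ℚ_[p]) * u ^ 2 - a * v ^ 2‖ ≤ max ‖(d : ℚ_[p]) * u ^ 2 - a * v ^ 2‖ ‖z‖ :=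
      le_max_left _ _
    have hMe : ∃ m : ℚ_[p], ‖m‖ = max ‖(d : ℚ_[p]) * u ^ 2 - a * v ^ 2‖ ‖z‖ := by
      rcases max_choice ‖(d : ℚ_[p]) * u ^ 2 - a * v ^ 2‖ ‖z‖ with h | h
      · exact ⟨_, h.symm⟩
      · exact ⟨_, h.symm⟩
    obtain ⟨m, hm⟩ := hMe
    rw [← hm] at hN hM0 hle
    have hv : v ≠ 0 := by
      rintro rfl
      have hm0 : ‖m‖ = 0 := by
        have : ‖m‖ ^ 2 = 0 := by rw [← hN]; simp
        exact pow_eq_zero_iff (two_ne_zero) |>.1 this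
      rw [hm0] at hle
      have h0 := norm_le_zero_iff.1 hle
      have : u = 0 := by simpa [hdq] using h0
      exact huv (by rw [this])
    have hvn : 0 < ‖v‖ := norm_pos_iff.2 hv
    have hbq : (b : ℚ_[p]) ≠ 0 := by exact_mod_cast hb
    have hbm : ‖(b : ℚ_[p])‖ = ‖m / v ^ 2‖ ^ 2 := by
      rw [norm_div, norm_pow, div_pow, eq_div_iff (by positivity), ← hN]; ring
    rcases hor with hodd | ha1
    · have hmv : m / v ^ 2 ≠ 0 := by
        intro h0
        rw [h0] at hbm
        simp at hbm
        exact hb hbm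
      rw [Padic.norm_eq_zpow_neg_valuation hbq, Padic.norm_eq_zpow_neg_valuation hmv,
        ← zpow_natCast, ← zpow_mul, zpow_right_inj₀ (by exact_mod_cast hp1.pos)
        (by exact_mod_cast hp1.one_lt.ne'), Padic.valuation_intCast] at hbm
      obtain ⟨j, hj⟩ := hodd
      rw [hj] at hbm
      push_cast at hbm
      omega
    · have hb1 : ‖(b : ℚ_[p])‖ < 1 := Padic.norm_intCast_lt_one_iff.2 hpb
      have hlt : ‖m / v ^ 2‖ < 1 := by
        rw [hbm] at hb1
        exact (sq_lt_one_iff₀ (norm_nonneg _)).1 hb1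
      have hlt2 : ‖(d : ℚ_[p]) * (u / v) ^ 2 - a‖ < 1 := by
        have : (d : ℚ_[p]) * (u / v) ^ 2 - a = (d * u ^ 2 - a * v ^ 2) / v ^ 2 := by field_simp
        rw [this]
        refine lt_of_le_of_lt ?_ hlt
        rw [norm_div, norm_div]
        gcongr
      have hdn : ‖(d : ℚ_[p])‖ = 1 := by
        refine le_antisymm (Padic.norm_int_le_one d) (not_lt.1 fun hlt => hdz ?_)
        rwa [Padic.norm_intCast_lt_one_iff, ← ZMod.intCast_zmod_eq_zero_iff_dvd] at hlt
      have hs1 : ‖u / v‖ ≤ 1 := by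
        have h3 : ‖(d : ℚ_[p]) * (u / v) ^ 2‖ ≤ 1 := by
          have := Padic.nonarchimedean ((d : ℚ_[p]) * (u / v) ^ 2 - (a : ℚ_[p])) (a : ℚ_[p])
          rw [sub_add_cancel] at this
          exact this.trans (max_le hlt2.le (Padic.norm_int_le_one a))
        rw [norm_mul, hdn, one_mul, norm_pow] at h3
        exact (sq_le_one_iff₀ (norm_nonneg _)).1 h3
      set s : ℤ_[p] := ⟨u / v, hs1⟩ with hs
      have h5 : ‖(d : ℤ_[p]) * s ^ 2 - a‖ < 1 := by
        rw [PadicInt.norm_def]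
        push_cast
        exact hlt2
      rw [aux_key, map_sub, map_mul, map_pow, map_intCast, map_intCast, sub_eq_zero] at h5
      rw [legendreSym.eq_one_iff p haz] at ha1
      obtain ⟨r, hr⟩ := ha1
      have hsz : PadicInt.toZMod s ≠ 0 := by
        intro h0
        rw [h0] at h5
        apply haz
        rw [← h5]; ring
      apply hns
      refine ⟨r / PadicInt.toZMod s, ?_⟩
      field_simp
      rw [h5, hr, sq]
end

section
/- Let D be a nonzero squarefree integer such that either (i) every prime factor of D is congruent to 5 modulo 12, or (ii) all prime factors of D except exactly one are congruent to 5 modulo 12, and the remaining prime factor is congruent to 3 modulo 4. Then the rank of the elliptic curve E₀^{(D)}: y² = x³ − D³ over ℚ is at most 1. -/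
open TensorProduct

/-- The quadratic twist `y² = x³ − D³` of the elliptic curve `y² = x³ − 1`. -/
noncomputable def E0twist (D : ℤ) : WeierstrassCurve.Affine ℚ :=
  { a₁ := 0, a₂ := 0, a₃ := 0, a₄ := 0, a₆ := -(D : ℚ) ^ 3 }

/-- The Mordell–Weil rank of a Weierstrass curve over `ℚ`: the dimension of the
`ℚ`-vector space `E(ℚ) ⊗_ℤ ℚ`. -/
noncomputable def mwRank (W : WeierstrassCurve.Affine ℚ) : Cardinal :=
  Module.rank ℚ (ℚ ⊗[ℤ] W.Point)

/-! ### Group theory: rank bounds and descent -/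

theorem rank_le_one_of_dep {G : Type} [AddCommGroup G] (P₀ : G)
    (h : ∀ Q : G, ∃ n m : ℤ, n ≠ 0 ∧ n • Q = m • P₀) :
    Module.rank ℚ (ℚ ⊗[ℤ] G) ≤ 1 := by
  rw [rank_le_one_iff]
  refine ⟨1 ⊗ₜ P₀, fun v => ?_⟩
  induction v using TensorProduct.induction_on with
  | zero => exact ⟨0, by simp⟩
  | tmul q Q =>
    obtain ⟨n, m, hn, hnm⟩ := h Q
    refine ⟨q * m / n, ?_⟩
    have hn' : (n : ℚ) ≠ 0 := by exact_mod_cast hn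
    have h1 : q ⊗ₜ[ℤ] Q = (q / n) ⊗ₜ[ℤ] (n • Q) := by
      rw [← TensorProduct.smul_tmul]
      congr 1
      rw [zsmul_eq_mul]; field_simp
    rw [h1, hnm, ← TensorProduct.smul_tmul, TensorProduct.smul_tmul']
    congr 1
    rw [zsmul_eq_mul, smul_eq_mul]; ring
  | add x y hx hy =>
    obtain ⟨r, hr⟩ := hx
    obtain ⟨s, hs⟩ := hy
    exact ⟨r + s, by rw [add_smul, hr, hs]⟩

theorem descent {G : Type} [AddCommGroup G] (h : G → ℝ) (h0 : h 0 = 0) (hpos : ∀ P, 0 ≤ h P)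
    (hfin : ∀ B : ℝ, {P | h P ≤ B}.Finite) (C : ℝ)
    (hC : ∀ P Q, |h (P + Q) + h (P - Q) - 2 * (h P + h Q)| ≤ C)
    (H : AddSubgroup G) (S : Set G) (hS : S.Finite) (hSH : S ⊆ H)
    (hcov : ∀ Q : G, ∃ s ∈ S, ∃ R : G, Q = s + 2 • R) (Q : G) :
    ∃ n : ℕ, n ≠ 0 ∧ n • Q ∈ H := by
  choose f hf g hg using hcov
  obtain ⟨M0, hM0⟩ : ∃ M0, ∀ s ∈ S, h s ≤ M0 := by
    obtain ⟨M, hM⟩ := (hS.image h).bddAbove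
    exact ⟨M, fun s hs => hM ⟨s, hs, rfl⟩⟩
  have step : ∀ Q, h (g Q) ≤ h Q / 2 + (M0 + C) / 2 := by
    intro Q
    have e1 := hC (g Q) (g Q)
    have e2 := hC Q (f Q)
    have e3 : Q - f Q = g Q + g Q := by
      rw [sub_eq_iff_eq_add]
      conv_lhs => rw [hg Q]
      rw [two_smul]; abel
    rw [sub_self, h0] at e1
    rw [e3] at e2
    have e4 := hM0 _ (hf Q)
    have e5 := hpos (Q + f Q)
    rw [abs_le] at e1 e2
    linarith [e1.1, e2.2]
  let s : ℕ → G := fun n => g^[n] Q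
  have hs : ∀ n, s (n + 1) = g (s n) := fun n => Function.iterate_succ_apply' g n Q
  have hb : ∀ n, h (s n) ≤ max (h Q) (M0 + C) := by
    intro n
    induction n with
    | zero => exact le_max_left _ _
    | succ n ih =>
      rw [hs]
      have := step (s n)
      have := le_max_right (h Q) (M0 + C)
      linarith
  have hA : ∀ n, Q - (2 ^ n) • s n ∈ H := by
    intro n
    induction n with
    | zero => simp [s]
    | succ n ih =>
      have : Q - (2 ^ (n + 1)) • s (n + 1) = (Q - (2 ^ n) • s n) + (2 ^ n) • f (s n) := by
        conv_rhs => rw [hg (s n)]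
        rw [hs, pow_succ, mul_smul, smul_add]
        have : f (f (s n) + 2 • g (s n)) = f (s n) := by rw [← hg (s n)]
        rw [this]; abel
      rw [this]
      exact H.add_mem ih (H.nsmul_mem (hSH (hf _)) _)
  obtain ⟨m, n, hmn, he⟩ : ∃ m n, m < n ∧ s m = s n := by
    have := (hfin (max (h Q) (M0 + C)))
    obtain ⟨m, -, n, -, hne, he⟩ := Set.infinite_univ.exists_ne_map_eq_of_mapsTo
      (s := (Set.univ : Set ℕ)) (f := s) (fun n _ => hb n) this
    rcases lt_or_gt_of_ne hne with h1 | h1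
    · exact ⟨m, n, h1, he⟩
    · exact ⟨n, m, h1, he.symm⟩
  obtain ⟨k, rfl⟩ := Nat.exists_eq_add_of_lt hmn
  refine ⟨2 ^ (k + 1) - 1, ?_, ?_⟩
  · have : 2 ≤ 2 ^ (k + 1) := by rw [pow_succ]; linarith [Nat.one_le_two_pow (n := k)]
    omega
  · have e1 := H.nsmul_mem (hA m) (2 ^ (k + 1))
    have e2 := hA (m + k + 1)
    have e3 := H.sub_mem e1 e2
    rw [← he] at e3
    convert e3 using 1
    rw [smul_sub, smul_smul, ← pow_add, show k + 1 + m = m + k + 1 by ring,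
      sub_nsmul Q (Nat.one_le_two_pow), one_smul]
    abel

/-! ### Lines on curves `y² = x³ + a₂ x² + a₄ x + a₆` -/

open WeierstrassCurve.Affine

/-- Three points on the line `y = l x + n` with the right multiplicities. -/
def OnLine (W : WeierstrassCurve.Affine ℚ) (l n x₁ x₂ x₃ : ℚ) : Prop :=
  ∀ t : ℚ, t ^ 3 + W.a₂ * t ^ 2 + W.a₄ * t + W.a₆ - (l * t + n) ^ 2 =
    (t - x₁) * (t - x₂) * (t - x₃)

theorem OnLine.rels {W : WeierstrassCurve.Affine ℚ} {l n x₁ x₂ x₃ : ℚ}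
    (h : OnLine W l n x₁ x₂ x₃) :
    x₁ + x₂ + x₃ = l ^ 2 - W.a₂ ∧ x₁ * x₂ + x₁ * x₃ + x₂ * x₃ = W.a₄ - 2 * l * n ∧
      x₁ * x₂ * x₃ = n ^ 2 - W.a₆ := by
  have h0 := h 0
  have h1 := h 1
  have h2 := h (-1)
  refine ⟨?_, ?_, ?_⟩ <;> linarith

theorem OnLine.of_rels {W : WeierstrassCurve.Affine ℚ} {l n x₁ x₂ x₃ : ℚ}
    (h1 : x₁ + x₂ + x₃ = l ^ 2 - W.a₂)
    (h2 : x₁ * x₂ + x₁ * x₃ + x₂ * x₃ = W.a₄ - 2 * l * n)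
    (h3 : x₁ * x₂ * x₃ = n ^ 2 - W.a₆) : OnLine W l n x₁ x₂ x₃ := by
  intro t
  linear_combination t ^ 2 * h1 - t * h2 + h3

theorem eqn_iff {W : WeierstrassCurve.Affine ℚ} (h₁ : W.a₁ = 0) (h₃ : W.a₃ = 0) (x y : ℚ) :
    W.Equation x y ↔ y ^ 2 = x ^ 3 + W.a₂ * x ^ 2 + W.a₄ * x + W.a₆ := by
  rw [equation_iff, h₁, h₃]; simp

theorem neg_some' {W : WeierstrassCurve.Affine ℚ} (h₁ : W.a₁ = 0) (h₃ : W.a₃ = 0) {x y : ℚ}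
    (h : W.Nonsingular x y) (h' : W.Nonsingular x (-y)) :
    -(Point.some x y h) = Point.some x (-y) h' := by
  simp [Point.neg_some, negY, h₁, h₃]

theorem nonsing_neg {W : WeierstrassCurve.Affine ℚ} (h₁ : W.a₁ = 0) (h₃ : W.a₃ = 0) {x y : ℚ}
    (h : W.Nonsingular x y) : W.Nonsingular x (-y) := by
  have := (nonsingular_neg x y).2 h
  simpa [negY, h₁, h₃] using this

theorem nonsing_y {W : WeierstrassCurve.Affine ℚ} (h₁ : W.a₁ = 0) (h₃ : W.a₃ = 0) {x y : ℚ}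
    (h : W.Nonsingular x y) (hy : y = 0) : 3 * x ^ 2 + 2 * W.a₂ * x + W.a₄ ≠ 0 := by
  rw [nonsingular_iff, h₁, h₃] at h
  subst hy
  rcases h.2 with h | h
  · intro hh; apply h; simp [hh]
  · simp at h

/-- Collinear points sum to zero. -/
theorem sum_zero_of_onLine {W : WeierstrassCurve.Affine ℚ} (h₁ : W.a₁ = 0) (h₃ : W.a₃ = 0)
    {l n x₁ x₂ x₃ y₁ y₂ y₃ : ℚ} (hl : OnLine W l n x₁ x₂ x₃)
    (n₁ : W.Nonsingular x₁ y₁) (n₂ : W.Nonsingular x₂ y₂) (n₃ : W.Nonsingular x₃ y₃)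
    (e₁ : y₁ = l * x₁ + n) (e₂ : y₂ = l * x₂ + n) (e₃ : y₃ = l * x₃ + n) :
    Point.some x₁ y₁ n₁ + Point.some x₂ y₂ n₂ + Point.some x₃ y₃ n₃ = 0 := by
  obtain ⟨r1, r2, r3⟩ := hl.rels
  have hxy : ¬(x₁ = x₂ ∧ y₁ = W.negY x₂ y₂) := by
    rintro ⟨hx, hy⟩
    subst hx
    have : y₁ = y₂ := by rw [e₁, e₂]
    subst this
    simp only [negY, h₁, h₃] at hy
    have hy0 : y₁ = 0 := by linarith
    apply nonsing_y h₁ h₃ n₁ hy0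
    rw [hy0] at e₁
    linear_combination (2 * x₁) * r1 - r2 - 2 * l * e₁
  have hs : W.slope x₁ x₂ y₁ y₂ = l := by
    by_cases hx : x₁ = x₂
    · subst hx
      have : y₁ = y₂ := by rw [e₁, e₂]
      subst this
      have hy : y₁ ≠ W.negY x₁ y₁ := fun h => hxy ⟨rfl, h⟩
      rw [slope_of_Y_ne rfl hy]
      simp only [negY, h₁, h₃] at hy ⊢
      have hy0 : y₁ ≠ 0 := by intro h; apply hy; rw [h]; ring
      have : y₁ - (-y₁ - 0 * x₁ - 0) ≠ 0 := by ring_nf; simpa using hy0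
      rw [div_eq_iff this]
      rw [e₁]
      linear_combination (2 * x₁) * r1 - r2
    · rw [slope_of_X_ne hx, e₁, e₂]
      have : x₁ - x₂ ≠ 0 := sub_ne_zero.2 hx
      field_simp
      ring
  have hX : W.addX x₁ x₂ (W.slope x₁ x₂ y₁ y₂) = x₃ := by
    rw [hs, addX, h₁]; linarith
  rw [Point.add_some hxy]
  apply Point.add_of_Y_eq hX
  rw [addY, negAddY, hX, hs]
  simp only [negY, h₁, h₃]
  rw [e₁, e₃]; ring

/-- Two affine points whose sum is not zero lie on a line. -/
theorem exists_onLine {W : WeierstrassCurve.Affine ℚ} (h₁ : W.a₁ = 0) (h₃ : W.a₃ = 0)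
    {x₁ x₂ x₃ y₁ y₂ y₃ : ℚ}
    (n₁ : W.Nonsingular x₁ y₁) (n₂ : W.Nonsingular x₂ y₂) (n₃ : W.Nonsingular x₃ y₃)
    (hs : Point.some x₁ y₁ n₁ + Point.some x₂ y₂ n₂ + Point.some x₃ y₃ n₃ = 0) :
    ∃ l n, OnLine W l n x₁ x₂ x₃ ∧ y₁ = l * x₁ + n ∧ y₂ = l * x₂ + n ∧ y₃ = l * x₃ + n := by
  have hxy : ¬(x₁ = x₂ ∧ y₁ = W.negY x₂ y₂) := by
    rintro ⟨hx, hy⟩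
    rw [Point.add_of_Y_eq hx hy, zero_add] at hs
    exact Point.some_ne_zero _ hs
  rw [Point.add_some hxy, add_eq_zero_iff_eq_neg, Point.neg_some] at hs
  rw [Point.some.injEq] at hs
  obtain ⟨hX, hY⟩ := hs
  have hpoly := addPolynomial_slope n₁.1 n₂.1 hxy
  set l := W.slope x₁ x₂ y₁ y₂ with hldef
  rw [addY, negAddY] at hY
  rw [hX] at hY hpoly
  simp only [negY, h₁, h₃] at hY
  have hL : OnLine W l (y₁ - l * x₁) x₁ x₂ x₃ := by
    intro t
    have := congrArg (Polynomial.eval t) hpoly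
    rw [addPolynomial_eq] at this
    simp [h₁, h₃, Cubic.toPoly] at this
    linear_combination -this
  refine ⟨l, y₁ - l * x₁, hL, by ring, ?_, by linarith⟩
  by_cases hx : x₁ = x₂
  · subst hx
    have hy : y₁ ≠ W.negY x₁ y₂ := fun h => hxy ⟨rfl, h⟩
    have := Y_eq_of_Y_ne n₁.1 n₂.1 rfl hy
    rw [this]; ring
  · have : l * (x₁ - x₂) = y₁ - y₂ := by
      rw [hldef, slope_of_X_ne hx, div_mul_cancel₀ _ (sub_ne_zero.2 hx)]
    linarith

/-! ### The descent map `x - e` modulo squares -/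

/-- The descent map at the 2-torsion point `(e, 0)`. -/
noncomputable def al (W : WeierstrassCurve.Affine ℚ) (e : ℚ) : W.Point → ℚ
  | .zero => 1
  | .some x _ _ => if x = e then 3 * e ^ 2 + 2 * W.a₂ * e + W.a₄ else x - e

theorem al_zero (W : WeierstrassCurve.Affine ℚ) (e : ℚ) : al W e 0 = 1 := rfl

theorem al_some (W : WeierstrassCurve.Affine ℚ) (e : ℚ) {x y : ℚ} (h : W.Nonsingular x y) :
    al W e (.some x y h) = if x = e then 3 * e ^ 2 + 2 * W.a₂ * e + W.a₄ else x - e := rfl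

theorem al_neg (W : WeierstrassCurve.Affine ℚ) (e : ℚ) (P : W.Point) : al W e (-P) = al W e P := by
  rcases P with _ | ⟨x, y, h⟩
  · rfl
  · rw [Point.neg_some, al_some, al_some]

theorem al_ne_zero {W : WeierstrassCurve.Affine ℚ} {e : ℚ}
    (hd : 3 * e ^ 2 + 2 * W.a₂ * e + W.a₄ ≠ 0) (P : W.Point) : al W e P ≠ 0 := by
  rcases P with _ | ⟨x, y, h⟩
  · exact one_ne_zero
  · rw [al_some]
    split_ifs with hx
    · exact hd
    · exact sub_ne_zero.2 hx

theorem al_line {W : WeierstrassCurve.Affine ℚ} {e : ℚ}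
    (he : e ^ 3 + W.a₂ * e ^ 2 + W.a₄ * e + W.a₆ = 0)
    {l n x₂ x₃ : ℚ} (hl : OnLine W l n e x₂ x₃) :
    3 * e ^ 2 + 2 * W.a₂ * e + W.a₄ = (x₂ - e) * (x₃ - e) := by
  obtain ⟨r1, r2, r3⟩ := hl.rels
  have hn : l * e + n = 0 := by
    have := hl e
    rw [he] at this
    have : (l * e + n) ^ 2 = 0 := by linear_combination -this
    exact pow_eq_zero_iff (two_ne_zero) |>.1 this
  linear_combination (2 * e) * r1 - r2 + 2 * l * hn

theorem al_sum_zero {W : WeierstrassCurve.Affine ℚ} (h₁ : W.a₁ = 0) (h₃ : W.a₃ = 0) {e : ℚ}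
    (he : e ^ 3 + W.a₂ * e ^ 2 + W.a₄ * e + W.a₆ = 0)
    (hd : 3 * e ^ 2 + 2 * W.a₂ * e + W.a₄ ≠ 0)
    (P Q R : W.Point) (hs : P + Q + R = 0) : IsSquare (al W e P * al W e Q * al W e R) := by
  rcases P with _ | ⟨x₁, y₁, n₁⟩
  · have : R = -Q := by
      rw [← Point.zero_def, zero_add] at hs
      exact (neg_eq_of_add_eq_zero_right hs).symm
    rw [this, al_neg]
    exact ⟨al W e Q, by rw [← Point.zero_def, al_zero]; ring⟩
  rcases Q with _ | ⟨x₂, y₂, n₂⟩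
  · rw [← Point.zero_def, add_zero] at hs
    rw [← neg_eq_of_add_eq_zero_right hs, al_neg, ← Point.zero_def, al_zero]
    exact ⟨_, by rw [mul_one]⟩
  rcases R with _ | ⟨x₃, y₃, n₃⟩
  · rw [← Point.zero_def, add_zero] at hs
    rw [← neg_eq_of_add_eq_zero_right hs, al_neg, ← Point.zero_def, al_zero]
    exact ⟨_, by rw [mul_one]⟩
  obtain ⟨l, n, hl, -, -, -⟩ := exists_onLine h₁ h₃ n₁ n₂ n₃ hs
  have hl2 : OnLine W l n x₂ x₁ x₃ := fun t => by rw [hl t]; ring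
  have hl3 : OnLine W l n x₃ x₁ x₂ := fun t => by rw [hl t]; ring
  simp only [al_some]
  by_cases c1 : x₁ = e
  · subst c1
    have := al_line he hl
    have c2 : x₂ ≠ x₁ := by rintro rfl; apply hd; rw [this]; ring
    have c3 : x₃ ≠ x₁ := by rintro rfl; apply hd; rw [this]; ring
    rw [if_pos rfl, if_neg c2, if_neg c3, this]
    exact ⟨(x₂ - x₁) * (x₃ - x₁), by ring⟩
  by_cases c2 : x₂ = e
  · subst c2
    have := al_line he hl2
    have c3 : x₃ ≠ x₂ := by rintro rfl; apply hd; rw [this]; ring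
    rw [if_pos rfl, if_neg c1, if_neg c3, this]
    exact ⟨(x₁ - x₂) * (x₃ - x₂), by ring⟩
  by_cases c3 : x₃ = e
  · subst c3
    have := al_line he hl3
    rw [if_pos rfl, if_neg c1, if_neg c2, this]
    exact ⟨(x₁ - x₃) * (x₂ - x₃), by ring⟩
  rw [if_neg c1, if_neg c2, if_neg c3]
  refine ⟨l * e + n, ?_⟩
  have := hl e
  rw [he] at this
  linear_combination this

theorem al_add {W : WeierstrassCurve.Affine ℚ} (h₁ : W.a₁ = 0) (h₃ : W.a₃ = 0) {e : ℚ}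
    (he : e ^ 3 + W.a₂ * e ^ 2 + W.a₄ * e + W.a₆ = 0)
    (hd : 3 * e ^ 2 + 2 * W.a₂ * e + W.a₄ ≠ 0)
    (P Q : W.Point) : IsSquare (al W e P * al W e Q * al W e (P + Q)) := by
  have := al_sum_zero h₁ h₃ he hd P Q (-(P + Q)) (by abel)
  rwa [al_neg] at this

/-! ### The isogenous curve and the isogeny -/

/-- The curve `y² = x³ - 6 D x² - 3 D² x`, 2-isogenous to (a translate of) `y² = x³ - D³`. -/
noncomputable def E1 (D : ℤ) : WeierstrassCurve.Affine ℚ :=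
  { a₁ := 0, a₂ := -6 * D, a₃ := 0, a₄ := -3 * (D : ℚ) ^ 2, a₆ := 0 }

theorem E0_nonsing {D : ℤ} (hD : D ≠ 0) {x y : ℚ} (h : y ^ 2 = x ^ 3 - (D : ℚ) ^ 3) :
    (E0twist D).Nonsingular x y := by
  have hD' : (D : ℚ) ≠ 0 := by exact_mod_cast hD
  rw [nonsingular_iff]
  refine ⟨by rw [eqn_iff rfl rfl]; simp only [E0twist]; linear_combination h, ?_⟩
  simp only [E0twist]
  by_cases hy : y = 0
  · left
    have hx : x ≠ 0 := by
      rintro rfl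
      subst hy
      apply hD'
      have : (D : ℚ) ^ 3 = 0 := by linear_combination h
      simpa using this
    simp [hx, hy]
  · right
    intro h; apply hy; linarith

theorem E1_nonsing {D : ℤ} (hD : D ≠ 0) {x y : ℚ}
    (h : y ^ 2 = x ^ 3 - 6 * D * x ^ 2 - 3 * (D : ℚ) ^ 2 * x) :
    (E1 D).Nonsingular x y := by
  have hD' : (D : ℚ) ≠ 0 := by exact_mod_cast hD
  rw [nonsingular_iff]
  refine ⟨by rw [eqn_iff rfl rfl]; simp only [E1]; linear_combination h, ?_⟩
  simp only [E1]
  by_cases hy : y = 0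
  · left
    subst hy
    intro h'
    have h1 : x * (x ^ 2 - 6 * D * x - 3 * (D : ℚ) ^ 2) = 0 := by linear_combination -h
    have h2 : 3 * x ^ 2 - 12 * D * x - 3 * (D : ℚ) ^ 2 = 0 := by linear_combination -h'
    rcases mul_eq_zero.1 h1 with h3 | h3
    · subst h3
      apply hD'
      have : (D : ℚ) ^ 2 = 0 := by linear_combination (-1 / 3) * h2
      simpa using this
    · have h4 : (D : ℚ) * (x + D) = 0 := by linear_combination (1 / 6) * h2 - (1 / 2) * h3
      rcases mul_eq_zero.1 h4 with h5 | h5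
      · exact hD' h5
      · have : x = -D := by linarith
        rw [this] at h3
        apply hD'
        have : (D : ℚ) ^ 2 = 0 := by linear_combination (1 / 4) * h3
        simpa using this
  · right
    intro h; apply hy; linarith

theorem E0_eqn {D : ℤ} {x y : ℚ} (h : (E0twist D).Nonsingular x y) :
    y ^ 2 = x ^ 3 - (D : ℚ) ^ 3 := by
  have := (eqn_iff rfl rfl x y).1 h.1
  simp only [E0twist] at this
  linear_combination this

theorem E1_eqn {D : ℤ} {x y : ℚ} (h : (E1 D).Nonsingular x y) :
    y ^ 2 = x ^ 3 - 6 * D * x ^ 2 - 3 * (D : ℚ) ^ 2 * x := by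
  have := (eqn_iff rfl rfl x y).1 h.1
  simp only [E1] at this
  linear_combination this

theorem iso_nonsing {D : ℤ} (hD : D ≠ 0) {x y : ℚ} (h : (E1 D).Nonsingular x y) (hx : x ≠ 0) :
    (E0twist D).Nonsingular ((y / x) ^ 2 / 4 + D) (y / x * (-3 * (D : ℚ) ^ 2 / x - x) / 8) := by
  apply E0_nonsing hD
  have h := E1_eqn h
  obtain ⟨u, hu⟩ : ∃ u, y = u * x := ⟨y / x, by field_simp⟩
  subst hu
  have hu : u ^ 2 * x = x ^ 2 - 6 * D * x - 3 * (D : ℚ) ^ 2 := by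
    apply mul_right_cancel₀ hx
    linear_combination h
  rw [mul_div_cancel_right₀ _ hx]
  have hw : -3 * (D : ℚ) ^ 2 / x = u ^ 2 - x + 6 * D := by
    field_simp
    linear_combination -hu
  rw [hw]
  linear_combination -u ^ 2 * (1/16) * hu

open Classical in
/-- The 2-isogeny from `E1 D` to `E0twist D`. -/
noncomputable def iso {D : ℤ} (hD : D ≠ 0) : (E1 D).Point → (E0twist D).Point
  | .zero => 0
  | .some _ _ h => if hx : _ = 0 then 0 else .some _ _ (iso_nonsing hD h hx)

theorem iso_zero {D : ℤ} (hD : D ≠ 0) : iso hD 0 = 0 := rfl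

theorem iso_T {D : ℤ} (hD : D ≠ 0) {x y : ℚ} (h : (E1 D).Nonsingular x y) (hx : x = 0) :
    iso hD (.some x y h) = 0 := dif_pos hx

theorem iso_some {D : ℤ} (hD : D ≠ 0) {x y : ℚ} (h : (E1 D).Nonsingular x y) (hx : x ≠ 0) :
    iso hD (.some x y h) = .some _ _ (iso_nonsing hD h hx) := dif_neg hx

theorem some_congr {W : WeierstrassCurve.Affine ℚ} {x y x' y' : ℚ} (h : W.Nonsingular x y)
    (h' : W.Nonsingular x' y') (hx : x = x') (hy : y = y') :
    Point.some x y h = Point.some x' y' h' := by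
  subst hx; subst hy; rfl

theorem iso_neg {D : ℤ} (hD : D ≠ 0) (P : (E1 D).Point) : iso hD (-P) = - iso hD P := by
  rcases P with _ | ⟨x, y, h⟩
  · rfl
  · rw [neg_some' rfl rfl h (nonsing_neg rfl rfl h)]
    by_cases hx : x = 0
    · rw [iso_T _ _ hx, iso_T _ _ hx]; rfl
    · rw [iso_some _ _ hx, iso_some _ _ hx,
        neg_some' rfl rfl _ (nonsing_neg rfl rfl (iso_nonsing hD h hx))]
      apply some_congr <;> ring

/-- Collinear with the kernel point. -/
theorem iso_line_T {D : ℤ} (hD : D ≠ 0) {l n x₂ x₃ y₂ y₃ : ℚ} (hl : OnLine (E1 D) l n 0 x₂ x₃)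
    (n₂ : (E1 D).Nonsingular x₂ y₂) (n₃ : (E1 D).Nonsingular x₃ y₃)
    (e₂ : y₂ = l * x₂ + n) (e₃ : y₃ = l * x₃ + n) :
    iso hD (.some x₂ y₂ n₂) + iso hD (.some x₃ y₃ n₃) = 0 := by
  have hD' : (D : ℚ) ≠ 0 := by exact_mod_cast hD
  obtain ⟨r1, r2, r3⟩ := hl.rels
  simp only [E1] at r1 r2 r3
  have hn : n = 0 := by
    have : n ^ 2 = 0 := by linear_combination -r3
    exact pow_eq_zero_iff (two_ne_zero) |>.1 this
  subst hn
  have hb : x₂ * x₃ = -3 * (D : ℚ) ^ 2 := by linear_combination r2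
  have hb0 : -3 * (D : ℚ) ^ 2 ≠ 0 := by simp [hD']
  have hx2 : x₂ ≠ 0 := by rintro rfl; apply hb0; rw [← hb]; ring
  have hx3 : x₃ ≠ 0 := by rintro rfl; apply hb0; rw [← hb]; ring
  have u2 : y₂ / x₂ = l := by rw [e₂]; field_simp; ring
  have u3 : y₃ / x₃ = l := by rw [e₃]; field_simp; ring
  rw [iso_some _ _ hx2, iso_some _ _ hx3, add_eq_zero_iff_eq_neg,
    neg_some' rfl rfl _ (nonsing_neg rfl rfl (iso_nonsing hD n₃ hx3))]
  apply some_congr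
  · rw [u2, u3]
  · rw [u2, u3, ← hb]; field_simp; ring

theorem iso_sum_zero {D : ℤ} (hD : D ≠ 0) (P Q R : (E1 D).Point) (hs : P + Q + R = 0) :
    iso hD P + iso hD Q + iso hD R = 0 := by
  rcases P with _ | ⟨x₁, y₁, n₁⟩
  · rw [← Point.zero_def, zero_add] at hs
    rw [← neg_eq_of_add_eq_zero_right hs, iso_neg, ← Point.zero_def, iso_zero]
    abel
  rcases Q with _ | ⟨x₂, y₂, n₂⟩
  · rw [← Point.zero_def, add_zero] at hs
    rw [← neg_eq_of_add_eq_zero_right hs, iso_neg, ← Point.zero_def, iso_zero]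
    abel
  rcases R with _ | ⟨x₃, y₃, n₃⟩
  · rw [← Point.zero_def, add_zero] at hs
    rw [← neg_eq_of_add_eq_zero_right hs, iso_neg, ← Point.zero_def, iso_zero]
    abel
  obtain ⟨l, n, hl, e₁, e₂, e₃⟩ := exists_onLine rfl rfl n₁ n₂ n₃ hs
  have hl2 : OnLine (E1 D) l n x₂ x₁ x₃ := fun t => by rw [hl t]; ring
  have hl3 : OnLine (E1 D) l n x₃ x₁ x₂ := fun t => by rw [hl t]; ring
  by_cases c1 : x₁ = 0
  · rw [iso_T hD n₁ c1]
    subst c1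
    rw [zero_add]; exact iso_line_T hD hl n₂ n₃ e₂ e₃
  by_cases c2 : x₂ = 0
  · rw [iso_T hD n₂ c2]
    subst c2
    rw [add_zero]; exact iso_line_T hD hl2 n₁ n₃ e₁ e₃
  by_cases c3 : x₃ = 0
  · rw [iso_T hD n₃ c3]
    subst c3
    rw [add_zero]; exact iso_line_T hD hl3 n₁ n₂ e₁ e₂
  obtain ⟨r1, r2, r3⟩ := hl.rels
  simp only [E1] at r1 r2 r3
  have hn : n ≠ 0 := by
    rintro rfl
    have : x₁ * x₂ * x₃ = 0 := by rw [r3]; ring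
    simp [c1, c2, c3] at this
  rw [iso_some _ _ c1, iso_some _ _ c2, iso_some _ _ c3]
  obtain ⟨w₁, hw₁⟩ : ∃ w, w = 1 / x₁ := ⟨_, rfl⟩
  obtain ⟨w₂, hw₂⟩ : ∃ w, w = 1 / x₂ := ⟨_, rfl⟩
  obtain ⟨w₃, hw₃⟩ : ∃ w, w = 1 / x₃ := ⟨_, rfl⟩
  have u1 : y₁ / x₁ = l + n * w₁ := by rw [e₁, hw₁]; field_simp
  have u2 : y₂ / x₂ = l + n * w₂ := by rw [e₂, hw₂]; field_simp
  have u3 : y₃ / x₃ = l + n * w₃ := by rw [e₃, hw₃]; field_simp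
  have s3 : n ^ 2 * (w₁ * w₂ * w₃) = 1 := by
    have : n ^ 2 = x₁ * x₂ * x₃ := by linear_combination -r3
    rw [this, hw₁, hw₂, hw₃]; field_simp
  have s1 : n ^ 2 * (w₁ + w₂ + w₃) = -3 * (D : ℚ) ^ 2 - 2 * l * n := by
    have : n ^ 2 = x₁ * x₂ * x₃ := by linear_combination -r3
    rw [← r2, this, hw₁, hw₂, hw₃]; field_simp; ring
  have s2 : n ^ 2 * (w₁ * w₂ + w₁ * w₃ + w₂ * w₃) = l ^ 2 + 6 * D := by
    have h2 : n ^ 2 = x₁ * x₂ * x₃ := by linear_combination -r3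
    have : l ^ 2 + 6 * D = x₁ + x₂ + x₃ := by linear_combination -r1
    rw [this, h2, hw₁, hw₂, hw₃]; field_simp; ring
  obtain ⟨β, hβ⟩ : ∃ β, β * n = -3 * (D : ℚ) ^ 2 := ⟨-3 * (D : ℚ) ^ 2 / n, by field_simp⟩
  have t1 : n * (w₁ + w₂ + w₃) = β - 2 * l := by
    apply mul_left_cancel₀ hn
    linear_combination s1 - hβ
  obtain ⟨v₁, hv₁⟩ : ∃ v, v = l + n * w₁ := ⟨_, rfl⟩
  obtain ⟨v₂, hv₂⟩ : ∃ v, v = l + n * w₂ := ⟨_, rfl⟩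
  obtain ⟨v₃, hv₃⟩ : ∃ v, v = l + n * w₃ := ⟨_, rfl⟩
  have g1 : v₁ + v₂ + v₃ = l + β := by
    rw [hv₁, hv₂, hv₃]; linear_combination t1
  have g2 : v₁ * v₂ + v₁ * v₃ + v₂ * v₃ = 2 * l * β + 6 * D := by
    rw [hv₁, hv₂, hv₃]; linear_combination 2 * l * t1 + s2
  have g3 : v₁ * v₂ * v₃ = l ^ 2 * β + 6 * D * l + n := by
    rw [hv₁, hv₂, hv₃]; linear_combination l ^ 2 * t1 + l * s2 + n * s3
  -- the image points satisfy the line equation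
  have key : ∀ {x y w v : ℚ}, (E1 D).Nonsingular x y → x ≠ 0 → w = 1 / x → y / x = v →
      v = l + n * w → n ^ 2 * w ^ 3 - (n ^ 2 * (w₁ + w₂ + w₃)) * w ^ 2 +
        (n ^ 2 * (w₁ * w₂ + w₁ * w₃ + w₂ * w₃)) * w - n ^ 2 * (w₁ * w₂ * w₃) = 0 →
      v * (-3 * (D : ℚ) ^ 2 / x - x) / 8 = (β - l) / 2 * (v ^ 2 / 4 + D) +
        (-(l ^ 2 * β + 6 * D * l + n) / 8 - (β - l) / 2 * D) := by
    intro x y w v hxy hx hw hv hvw hcub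
    have hq := E1_eqn hxy
    have hx' : x = v ^ 2 + 6 * D + 3 * (D : ℚ) ^ 2 * w := by
      have : y = v * x := by rw [← hv]; field_simp
      rw [this] at hq
      rw [hw]
      field_simp
      apply mul_right_cancel₀ hx
      linear_combination -hq
    have hb : -3 * (D : ℚ) ^ 2 / x = -3 * (D : ℚ) ^ 2 * w := by rw [hw]; ring
    rw [hb]
    conv_lhs => rw [hx']
    rw [s1, s2, s3] at hcub
    apply mul_left_cancel₀ hn
    rw [hvw]
    linear_combination (-n ^ 2 / 8) * hcub + (-(1 / 4) * n * l * w - n ^ 2 * w ^ 2 / 8) * hβ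
  have k1 := key n₁ c1 hw₁ (u1.trans hv₁.symm) hv₁ (by ring)
  have k2 := key n₂ c2 hw₂ (u2.trans hv₂.symm) hv₂ (by ring)
  have k3 := key n₃ c3 hw₃ (u3.trans hv₃.symm) hv₃ (by ring)
  have q1 : v₁ ^ 2 + v₂ ^ 2 + v₃ ^ 2 = (l + β) ^ 2 - 2 * (2 * l * β + 6 * D) := by
    rw [← g1, ← g2]; ring
  have q2 : v₁ ^ 2 * v₂ ^ 2 + v₁ ^ 2 * v₃ ^ 2 + v₂ ^ 2 * v₃ ^ 2 =
      (2 * l * β + 6 * D) ^ 2 - 2 * (l + β) * (l ^ 2 * β + 6 * D * l + n) := by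
    rw [← g1, ← g2, ← g3]; ring
  have q3 : v₁ ^ 2 * v₂ ^ 2 * v₃ ^ 2 = (l ^ 2 * β + 6 * D * l + n) ^ 2 := by
    rw [← g3]; ring
  refine sum_zero_of_onLine (l := (β - l) / 2)
    (n := -(l ^ 2 * β + 6 * D * l + n) / 8 - (β - l) / 2 * D) rfl rfl ?_ _ _ _
    ?_ ?_ ?_
  · rw [u1.trans hv₁.symm, u2.trans hv₂.symm, u3.trans hv₃.symm]
    apply OnLine.of_rels
    · simp only [E0twist]
      linear_combination (1 / 4) * q1
    · simp only [E0twist]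
      linear_combination (1 / 16) * q2 + (D / 2 : ℚ) * q1 - (1/4) * hβ
    · simp only [E0twist]
      linear_combination (1 / 64) * q3 + (D / 16 : ℚ) * q2 + (D ^ 2 / 4 : ℚ) * q1 - (D / 4 : ℚ) * hβ
  · rw [u1.trans hv₁.symm]; exact k1
  · rw [u2.trans hv₂.symm]; exact k2
  · rw [u3.trans hv₃.symm]; exact k3

theorem iso_add {D : ℤ} (hD : D ≠ 0) (P Q : (E1 D).Point) :
    iso hD (P + Q) = iso hD P + iso hD Q := by
  have := iso_sum_zero hD P Q (-(P + Q)) (by abel)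
  rw [iso_neg] at this
  exact (add_neg_eq_zero.1 this).symm


/-! ### Kernels of the descent maps -/

theorem exists_iso_eq {D : ℤ} (hD : D ≠ 0) {x y r : ℚ} (h : (E0twist D).Nonsingular x y)
    (hr : r ≠ 0) (hx : x - D = r ^ 2) : ∃ P, iso hD P = .some x y h := by
  have hD' : (D : ℚ) ≠ 0 := by exact_mod_cast hD
  have hq := E0_eqn h
  have hx' : x = r ^ 2 + D := by linarith
  subst hx'
  obtain ⟨z, hz⟩ : ∃ z, y = r * z := ⟨y / r, by field_simp⟩
  subst hz
  have hz : z ^ 2 = r ^ 4 + 3 * D * r ^ 2 + 3 * (D : ℚ) ^ 2 := by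
    apply mul_left_cancel₀ (pow_ne_zero 2 hr)
    linear_combination hq
  have hprod : (2 * r ^ 2 + 3 * D - 2 * z) * (2 * r ^ 2 + 3 * D + 2 * z) = -3 * (D : ℚ) ^ 2 := by
    linear_combination -4 * hz
  have hx0 : 2 * r ^ 2 + 3 * D - 2 * z ≠ 0 := by
    intro h0
    rw [h0] at hprod
    simp [hD'] at hprod
  have hns : (E1 D).Nonsingular (2 * r ^ 2 + 3 * D - 2 * z)
      (2 * r * (2 * r ^ 2 + 3 * D - 2 * z)) := by
    apply E1_nonsing hD
    linear_combination (-4 * (2 * r ^ 2 + 3 * D - 2 * z)) * hz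
  refine ⟨.some _ _ hns, ?_⟩
  rw [iso_some _ _ hx0]
  have hu : 2 * r * (2 * r ^ 2 + 3 * D - 2 * z) / (2 * r ^ 2 + 3 * D - 2 * z) = 2 * r := by
    field_simp
  have hv : -3 * (D : ℚ) ^ 2 / (2 * r ^ 2 + 3 * D - 2 * z) = 2 * r ^ 2 + 3 * D + 2 * z := by
    rw [← hprod]; field_simp
  apply some_congr
  · rw [hu]; ring
  · rw [hu, hv]; ring

theorem iso_eq_two_smul {D : ℤ} (hD : D ≠ 0) {x y r : ℚ} (h : (E1 D).Nonsingular x y)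
    (hr : r ≠ 0) (hx : x = r ^ 2) : ∃ R, iso hD (.some x y h) = 2 • R := by
  have hD' : (D : ℚ) ≠ 0 := by exact_mod_cast hD
  have hq := E1_eqn h
  subst hx
  obtain ⟨z, hz⟩ : ∃ z, y = r * z := ⟨y / r, by field_simp⟩
  subst hz
  have hz : z ^ 2 = r ^ 4 - 6 * D * r ^ 2 - 3 * (D : ℚ) ^ 2 := by
    apply mul_left_cancel₀ (pow_ne_zero 2 hr)
    linear_combination hq
  obtain ⟨X, hX⟩ : ∃ X, X = (r ^ 2 - 3 * D - z) / 2 := ⟨_, rfl⟩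
  obtain ⟨K, hK⟩ : ∃ K, K = (r ^ 2 - 3 * D + z) / 2 := ⟨_, rfl⟩
  have hz' : z = K - X := by rw [hX, hK]; ring
  have hr2 : r ^ 2 = X + K + 3 * D := by rw [hX, hK]; ring
  have hXK : X * K = 3 * (D : ℚ) ^ 2 := by
    rw [hX, hK]; linear_combination (-1 / 4) * hz
  have hX0 : X ≠ 0 := by
    intro h0
    rw [h0] at hXK
    simp [hD'] at hXK
  have hns : (E0twist D).Nonsingular (X + D) (r * X) := by
    apply E0_nonsing hD
    linear_combination X ^ 2 * hr2 + X * hXK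
  refine ⟨.some _ _ hns, ?_⟩
  have hx0 : r ^ 2 ≠ 0 := pow_ne_zero 2 hr
  rw [iso_some _ _ hx0, two_smul]
  have hu : r * z / r ^ 2 = (K - X) / r := by rw [hz']; field_simp
  symm
  rw [← add_neg_eq_zero, neg_some' rfl rfl _ (nonsing_neg rfl rfl (iso_nonsing hD h hx0))]
  have hl2 : ((3 * X + 6 * D + K) / (2 * r)) * r * 2 = 3 * X + 6 * D + K := by field_simp
  refine sum_zero_of_onLine (l := (3 * X + 6 * D + K) / (2 * r))
    (n := r * X - (3 * X + 6 * D + K) / (2 * r) * (X + D)) rfl rfl ?_ _ _ _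
    (by ring) (by ring) ?_
  · rw [hu]
    apply OnLine.of_rels
    · simp only [E0twist]
      field_simp
      grind
    · simp only [E0twist]
      field_simp
      grind
    · simp only [E0twist]
      field_simp
      grind
  · rw [hu]
    field_simp
    grind

/-! ### Heights -/

theorem E0_elliptic {D : ℤ} (hD : D ≠ 0) : WeierstrassCurve.IsElliptic (E0twist D) := by
  have hD' : (D : ℚ) ≠ 0 := by exact_mod_cast hD
  constructor
  rw [isUnit_iff_ne_zero]
  simp only [WeierstrassCurve.Δ, WeierstrassCurve.b₂, WeierstrassCurve.b₄, WeierstrassCurve.b₆,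
    WeierstrassCurve.b₈, E0twist]
  ring_nf
  simp [hD']

theorem addSub_eval (D : ℤ) (s t u : ℚ) :
    (fun i => (WeierstrassCurve.addSubMap (E0twist D) i).eval ![s, t, u]) =
      ![s ^ 2 + 4 * (D : ℚ) ^ 3 * t * u, 2 * t * s - 4 * (D : ℚ) ^ 3 * u ^ 2, t ^ 2 - 4 * s * u] := by
  ext i
  fin_cases i <;>
  simp [WeierstrassCurve.addSubMap, WeierstrassCurve.b₂, WeierstrassCurve.b₄, WeierstrassCurve.b₆,
    WeierstrassCurve.b₈, E0twist] <;> ring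

theorem addSub_spec_double {D : ℤ} (P : (E0twist D).Point) :
    ∃ c : ℚ, c ≠ 0 ∧ (fun i => (WeierstrassCurve.addSubMap (E0twist D) i).eval (P.sym2x P)) =
      c • (P + P).sym2x 0 := by
  rcases P with _ | ⟨x, y, h⟩
  · refine ⟨1, one_ne_zero, ?_⟩
    rw [← Point.zero_def, add_zero, Point.sym2x_zero_zero, addSub_eval]
    simp
  · have hq := E0_eqn h
    rw [Point.sym2x_some_some, addSub_eval]
    by_cases hy : y = 0
    · have hsum : Point.some x y h + Point.some x y h = 0 := by
        apply Point.add_self_of_Y_eq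
        simp [negY, E0twist, hy]
      have hx : x ≠ 0 := by
        rintro rfl
        have := nonsing_y rfl rfl h hy
        simp [E0twist] at this
      rw [hsum, Point.sym2x_zero_zero]
      refine ⟨9 * x ^ 4, by simp [hx], ?_⟩
      rw [hy] at hq
      ext i
      fin_cases i
      · simp; linear_combination 8 * x * hq
      · simp; linear_combination -4 * hq
      · simp; ring
    · have hy' : y ≠ (E0twist D).negY x y := by
        simp only [negY, E0twist]
        intro hh; apply hy; linarith
      rw [Point.add_self_of_Y_ne hy', Point.sym2x_some_zero]
      refine ⟨4 * y ^ 2, by simp [hy], ?_⟩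
      have hX : 4 * y ^ 2 * (E0twist D).addX x x ((E0twist D).slope x x y y) =
          (x * x) ^ 2 + 4 * (D : ℚ) ^ 3 * (x + x) := by
        rw [slope_of_Y_ne rfl hy', addX]
        simp only [negY, E0twist]
        have : y - (-y - 0 * x - 0) = 2 * y := by ring
        rw [this]
        field_simp
        linear_combination (-32 * x) * hq
      generalize (E0twist D).addX x x ((E0twist D).slope x x y y) = X3 at hX ⊢
      ext i
      fin_cases i
      · simp; linear_combination -hX
      · simp; linear_combination -4 * hq
      · simp; ring

theorem addSub_spec {D : ℤ} (P Q : (E0twist D).Point) :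
    ∃ c : ℚ, c ≠ 0 ∧ (fun i => (WeierstrassCurve.addSubMap (E0twist D) i).eval (P.sym2x Q)) =
      c • (P + Q).sym2x (P - Q) := by
  by_cases h1 : P = Q
  · subst h1
    rw [sub_self]
    exact addSub_spec_double P
  by_cases h2 : P = -Q
  · subst h2
    rw [neg_add_cancel, Point.sym2x_neg_left, ← neg_add', Point.sym2x_comm 0, Point.sym2x_neg_left]
    exact addSub_spec_double Q
  rcases P with _ | ⟨x₁, y₁, n₁⟩
  · rcases Q with _ | ⟨x₂, y₂, n₂⟩
    · exact absurd rfl h1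
    refine ⟨1, one_ne_zero, ?_⟩
    rw [← Point.zero_def, zero_add, zero_sub, Point.sym2x_neg_right, Point.sym2x_zero_some,
      addSub_eval, Point.sym2x_some_some]
    ext i
    fin_cases i <;> simp <;> ring
  rcases Q with _ | ⟨x₂, y₂, n₂⟩
  · refine ⟨1, one_ne_zero, ?_⟩
    rw [← Point.zero_def, add_zero, sub_zero, Point.sym2x_some_zero,
      addSub_eval, Point.sym2x_some_some]
    ext i
    fin_cases i <;> simp <;> ring
  have hx : x₁ ≠ x₂ := by
    intro hx
    rcases Point.X_eq_iff.1 hx with h | h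
    · exact h1 h
    · exact h2 h
  have hx' : x₁ - x₂ ≠ 0 := sub_ne_zero.2 hx
  have q1 := E0_eqn n₁
  have q2 := E0_eqn n₂
  rw [sub_eq_add_neg (Point.some x₁ y₁ n₁), neg_some' rfl rfl n₂ (nonsing_neg rfl rfl n₂),
    Point.add_of_X_ne hx, Point.add_of_X_ne hx, Point.sym2x_some_some, Point.sym2x_some_some,
    addSub_eval]
  refine ⟨(x₁ - x₂) ^ 2, pow_ne_zero 2 hx', ?_⟩
  rw [slope_of_X_ne hx, slope_of_X_ne hx, addX, addX]
  simp only [E0twist]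
  ext i
  fin_cases i
  · simp; field_simp; grind
  · simp; field_simp; grind
  · simp; ring

/-- The naive logarithmic height. -/
noncomputable def ht {D : ℤ} (P : (E0twist D).Point) : ℝ := Height.logHeight P.xRep

theorem ht_parallelogram {D : ℤ} (hD : D ≠ 0) :
    ∃ C : ℝ, ∀ P Q : (E0twist D).Point, |ht (P + Q) + ht (P - Q) - 2 * (ht P + ht Q)| ≤ C := by
  haveI := E0_elliptic hD
  obtain ⟨C₁, hC₁⟩ :=
    WeierstrassCurve.abs_logHeight_addSubMap_sub_two_mul_logHeight_le (E0twist D)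
  obtain ⟨C₂, hC₂⟩ := Height.abs_logHeight_sym2_sub_le ℚ
  have key : ∀ P Q : (E0twist D).Point,
      |Height.logHeight (P.sym2x Q) - (ht P + ht Q)| ≤ C₂ := by
    intro P Q
    have e : ∀ R : (E0twist D).Point, R.xRep = ![R.xRep 0, R.xRep 1] := by
      intro R; ext i; fin_cases i <;> rfl
    have hP := Point.xRep_ne_zero P
    have hQ := Point.xRep_ne_zero Q
    rw [e P] at hP
    rw [e Q] at hQ
    have := hC₂ hP hQ
    rw [← e P, ← e Q] at this
    exact this
  refine ⟨C₁ + 3 * C₂, fun P Q => ?_⟩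
  obtain ⟨c, hc, hcs⟩ := addSub_spec P Q
  have a1 := hC₁ (P.sym2x Q)
  rw [hcs, Height.logHeight_smul_eq_logHeight _ hc] at a1
  have a2 := key P Q
  have a3 := key (P + Q) (P - Q)
  rw [abs_le] at *
  constructor <;> linarith [a1.1, a1.2, a2.1, a2.2, a3.1, a3.2]

theorem ht_zero {D : ℤ} : ht (0 : (E0twist D).Point) = 0 := by
  rw [ht, Point.xRep_zero]
  have : (![1, 0] : Fin 2 → ℚ) = ![1, 0] := rfl
  rw [Height.logHeight_eq_log_mulHeight, Height.mulHeight_swap, ← Height.mulHeight₁_eq_mulHeight]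
  simp

theorem ht_nonneg {D : ℤ} (P : (E0twist D).Point) : 0 ≤ ht P := Height.logHeight_nonneg _

theorem ht_finite {D : ℤ} (B : ℝ) : {P : (E0twist D).Point | ht P ≤ B}.Finite := by
  have hf : {x : ℚ | Height.logHeight₁ x ≤ B}.Finite := NumberField.finite_setOfPred_logHeight₁_le ℚ B
  have hf2 : ({![1, 0]} ∪ (fun x : ℚ => ![x, 1]) '' {x : ℚ | Height.logHeight₁ x ≤ B}).Finite :=
    (Set.finite_singleton _).union (hf.image _)
  refine Set.Finite.of_finite_fibers (f := fun P : (E0twist D).Point => P.xRep) ?_ ?_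
  · refine hf2.subset ?_
    rintro _ ⟨P, hP, rfl⟩
    rcases P with _ | ⟨x, y, h⟩
    · left; rfl
    · right
      refine ⟨x, ?_, rfl⟩
      have : ht (Point.some x y h) ≤ B := hP
      rw [ht, Point.xRep_some, ← Height.logHeight₁_eq_logHeight] at this
      exact this
  · rintro _ ⟨P, hP, rfl⟩
    refine (Set.toFinite {P, -P}).subset ?_
    rintro Q ⟨-, hQ⟩
    rcases Point.eq_or_eq_neg_of_xRep_eq_xRep hQ with h | h
    · left; exact h
    · right; exact h


theorem nonsq_two : ¬ IsSquare (2 : ZMod 3) := by decide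

theorem nat_isSquare_of_even {n : ℕ} (hn : n ≠ 0)
    (h : ∀ q : ℕ, q.Prime → Even (padicValNat q n)) : IsSquare n := by
  obtain ⟨a, b, hab, hsf⟩ := Nat.sq_mul_squarefree n
  have ha0 : a ≠ 0 := by rintro rfl; simp at hab; exact hn hab.symm
  have hb0 : b ≠ 0 := by rintro rfl; simp at hab; exact hn hab.symm
  have : a = 1 := by
    by_contra ha
    obtain ⟨q, hq, hqa⟩ := Nat.exists_prime_and_dvd ha
    have : Fact q.Prime := ⟨hq⟩
    have h1 := h q hq
    rw [← hab, padicValNat.mul (pow_ne_zero 2 hb0) ha0, padicValNat.pow] at h1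
    have h2 : 1 ≤ padicValNat q a := one_le_padicValNat_of_dvd ha0 hqa
    have h3 : ¬ 2 ≤ padicValNat q a := by
      intro h3
      have h4 : q ^ 2 ∣ a := (padicValNat_dvd_iff_le ha0).2 h3
      rw [pow_two] at h4
      have := hsf q h4
      exact hq.one_lt.ne' (Nat.isUnit_iff.1 this)
    obtain ⟨k, hk⟩ := h1
    omega
  subst this
  exact ⟨b, by rw [← hab]; ring⟩

theorem rat_isSquare_of_even {X : ℚ} (hX : 0 < X)
    (h : ∀ q : ℕ, q.Prime → Even (padicValRat q X)) : IsSquare X := by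
  have hnum : 0 < X.num := Rat.num_pos.2 hX
  rw [Rat.isSquare_iff]
  have hn0 : X.num.natAbs ≠ 0 := by omega
  have key : ∀ q : ℕ, q.Prime → Even (padicValNat q X.num.natAbs) ∧ Even (padicValNat q X.den) := by
    intro q hq
    have : Fact q.Prime := ⟨hq⟩
    have h1 := h q hq
    rw [padicValRat, padicValInt] at h1
    by_cases hd : q ∣ X.den
    · have hnd : ¬ q ∣ X.num.natAbs := fun hh => by
        have := Nat.dvd_gcd hh hd
        rw [X.reduced] at this
        exact hq.one_lt.ne' (Nat.dvd_one.1 this)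
      rw [padicValNat.eq_zero_of_not_dvd hnd] at h1 ⊢
      refine ⟨by simp, ?_⟩
      obtain ⟨k, hk⟩ := h1
      exact ⟨(-k).toNat, by omega⟩
    · rw [padicValNat.eq_zero_of_not_dvd hd] at h1 ⊢
      refine ⟨?_, by simp⟩
      obtain ⟨k, hk⟩ := h1
      exact ⟨k.toNat, by omega⟩
  constructor
  · have := nat_isSquare_of_even hn0 (fun q hq => (key q hq).1)
    obtain ⟨r, hr⟩ := this
    exact ⟨r, by rw [← Nat.cast_mul, ← hr]; omega⟩
  · exact nat_isSquare_of_even X.den_nz (fun q hq => (key q hq).2)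

theorem even_val_norm_int {q : ℕ} (hq : q.Prime) {n : ℤ} (hn : ¬ IsSquare (n : ZMod q)) (a b : ℤ)
    (h : a ^ 2 - n * b ^ 2 ≠ 0) : Even (padicValInt q (a ^ 2 - n * b ^ 2)) := by
  have : Fact q.Prime := ⟨hq⟩
  have hg : Int.gcd a b ≠ 0 := by
    intro hg
    rw [Int.gcd_eq_zero_iff] at hg
    apply h; rw [hg.1, hg.2]; ring
  obtain ⟨g, a', b', hg0, hcop, rfl, rfl⟩ := Int.exists_gcd_one' (Nat.pos_of_ne_zero hg)
  have e : (a' * g) ^ 2 - n * (b' * g) ^ 2 = (g : ℤ) ^ 2 * (a' ^ 2 - n * b' ^ 2) := by ring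
  rw [e] at h ⊢
  have h1 : (a' ^ 2 - n * b' ^ 2) ≠ 0 := right_ne_zero_of_mul h
  have h2 : (g : ℤ) ^ 2 ≠ 0 := left_ne_zero_of_mul h
  rw [padicValInt.mul h2 h1, padicValInt.eq_zero_of_not_dvd (z := a' ^ 2 - n * b' ^ 2), add_zero, pow_two,
    padicValInt.mul (by rintro hh; simp [hh] at h2) (by rintro hh; simp [hh] at h2)]
  · exact ⟨_, rfl⟩
  · intro hd
    rw [← ZMod.intCast_zmod_eq_zero_iff_dvd] at hd
    push_cast at hd
    by_cases hb : (b' : ZMod q) = 0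
    · have ha : (a' : ZMod q) = 0 := by
        rw [hb] at hd; simpa using hd
      rw [ZMod.intCast_zmod_eq_zero_iff_dvd] at ha hb
      have := Int.dvd_coe_gcd ha hb
      rw [hcop] at this
      have := Int.natCast_dvd_natCast.1 (by exact_mod_cast this : (q : ℤ) ∣ (1 : ℕ))
      exact hq.one_lt.ne' (Nat.dvd_one.1 this)
    · apply hn
      refine ⟨a' / b', ?_⟩
      field_simp
      linear_combination -hd

theorem even_val_norm {q : ℕ} (hq : q.Prime) {n : ℤ} (hn : ¬ IsSquare (n : ZMod q)) (A B : ℚ)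
    (h : A ^ 2 - n * B ^ 2 ≠ 0) : Even (padicValRat q (A ^ 2 - n * B ^ 2)) := by
  have : Fact q.Prime := ⟨hq⟩
  have hA : (A.den : ℚ) ≠ 0 := by exact_mod_cast A.den_nz
  have hB : (B.den : ℚ) ≠ 0 := by exact_mod_cast B.den_nz
  have e : (((A.num * B.den) ^ 2 - n * (B.num * A.den) ^ 2 : ℤ) : ℚ) =
      (A.den * B.den : ℚ) ^ 2 * (A ^ 2 - n * B ^ 2) := by
    push_cast
    have h1 : (A.num : ℚ) = A * A.den := (Rat.mul_den_eq_num A).symm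
    have h2 : (B.num : ℚ) = B * B.den := (Rat.mul_den_eq_num B).symm
    rw [h1, h2]; ring
  have h3 : (A.den * B.den : ℚ) ^ 2 ≠ 0 := by positivity
  have h4 : ((A.num * B.den) ^ 2 - n * (B.num * A.den) ^ 2 : ℤ) ≠ 0 := by
    intro hh
    rw [hh, Int.cast_zero] at e
    exact mul_ne_zero h3 h e.symm
  have h5 := even_val_norm_int hq hn _ _ h4
  have h6 := congrArg (padicValRat q) e
  rw [padicValRat.of_int, padicValRat.mul h3 h, padicValRat.pow] at h6
  obtain ⟨k, hk⟩ := h5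
  rw [hk] at h6
  push_cast at h6
  exact ⟨k - padicValRat q (A.den * B.den : ℚ), by linarith⟩

theorem even_val_good {q : ℕ} (hq : q.Prime) {a b : ℤ} (hb : ¬ (q : ℤ) ∣ b) {X y : ℚ}
    (hX : X ≠ 0) (hN : X ^ 2 + a * X + b ≠ 0)
    (h : y ^ 2 = X * (X ^ 2 + a * X + b)) : Even (padicValRat q X) := by
  have : Fact q.Prime := ⟨hq⟩
  have hqi : Prime (q : ℤ) := Nat.prime_iff_prime_int.1 hq
  have hd : (X.den : ℚ) ≠ 0 := by exact_mod_cast X.den_nz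
  have hdz : (X.den : ℤ) ≠ 0 := by exact_mod_cast X.den_nz
  have hnz : X.num ≠ 0 := by simpa using hX
  have h1 : (X.num : ℚ) = X * X.den := (Rat.mul_den_eq_num X).symm
  set M : ℤ := X.num ^ 2 + a * X.num * X.den + b * X.den ^ 2 with hM
  have e1 : (M : ℚ) = X.den ^ 2 * (X ^ 2 + a * X + b) := by
    rw [hM]; push_cast; rw [h1]; ring
  have hM0 : M ≠ 0 := by
    intro hh; rw [hh, Int.cast_zero] at e1
    exact mul_ne_zero (pow_ne_zero 2 hd) hN e1.symm
  have e2 : ((X.num * X.den * M : ℤ) : ℚ) = (X.den ^ 2 * y) ^ 2 := by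
    push_cast; rw [e1, h1, mul_pow, h]; ring
  have hsq : IsSquare (X.num * X.den * M : ℤ) := by
    rw [← Rat.isSquare_intCast_iff, e2]
    exact ⟨_, pow_two _⟩
  obtain ⟨w, hw⟩ := hsq
  have hw0 : w ≠ 0 := by
    rintro rfl
    exact mul_ne_zero (mul_ne_zero hnz hdz) hM0 (by simpa using hw)
  have hv := congrArg (padicValInt q) hw
  rw [padicValInt.mul (mul_ne_zero hnz hdz) hM0, padicValInt.mul hnz hdz, padicValInt.mul hw0 hw0] at hv
  rw [padicValRat]
  have hden : padicValInt q (X.den : ℤ) = padicValNat q X.den := padicValInt.of_nat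
  rw [hden] at hv
  by_cases hqn : (q : ℤ) ∣ X.num
  · have hqd : ¬ (q : ℤ) ∣ X.den := by
      intro hh
      have := Nat.dvd_gcd (Int.natCast_dvd.1 hqn) (Int.natCast_dvd_natCast.1 hh)
      rw [X.reduced] at this
      exact hq.one_lt.ne' (Nat.dvd_one.1 this)
    have hqM : ¬ (q : ℤ) ∣ M := by
      intro hh
      have h2 : (q : ℤ) ∣ b * X.den ^ 2 := by
        have : b * (X.den : ℤ) ^ 2 = M - X.num * (X.num + a * X.den) := by rw [hM]; ring
        rw [this]
        exact dvd_sub hh (dvd_mul_of_dvd_left hqn _)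
      rcases hqi.dvd_or_dvd h2 with h3 | h3
      · exact hb h3
      · exact hqd (hqi.dvd_of_dvd_pow h3)
    rw [padicValInt.eq_zero_of_not_dvd hqM] at hv
    have : padicValNat q X.den = 0 :=
      padicValNat.eq_zero_of_not_dvd (fun hh => hqd (Int.natCast_dvd_natCast.2 hh))
    rw [this] at hv ⊢
    exact ⟨padicValInt q w, by push_cast; omega⟩
  · rw [padicValInt.eq_zero_of_not_dvd hqn] at hv ⊢
    by_cases hqd : (q : ℤ) ∣ X.den
    · have hqM : ¬ (q : ℤ) ∣ M := by
        intro hh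
        have h2 : (q : ℤ) ∣ X.num ^ 2 := by
          have : X.num ^ 2 = M - X.den * (a * X.num + b * X.den) := by rw [hM]; ring
          rw [this]
          exact dvd_sub hh (dvd_mul_of_dvd_left hqd _)
        exact hqn (hqi.dvd_of_dvd_pow h2)
      rw [padicValInt.eq_zero_of_not_dvd hqM] at hv
      exact ⟨-(padicValInt q w : ℤ), by omega⟩
    · have : padicValNat q X.den = 0 :=
        padicValNat.eq_zero_of_not_dvd (fun hh => hqd (Int.natCast_dvd_natCast.2 hh))
      rw [this]
      simp

theorem nonsq_three {q : ℕ} (hq : q.Prime) (h : q % 12 = 5 ∨ q % 12 = 7) :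
    ¬ IsSquare ((3 : ℤ) : ZMod q) := by
  have : Fact q.Prime := ⟨hq⟩
  have : Fact (Nat.Prime 3) := ⟨by norm_num⟩
  push_cast
  rcases h with h | h
  · have h1 := ZMod.exists_sq_eq_prime_iff_of_mod_four_eq_one (p := q) (q := 3) (by omega) (by norm_num)
    push_cast at h1
    rw [h1]
    have : (q : ZMod 3) = 2 := by
      have : ((q : ℕ) : ZMod 3) = ((2 : ℕ) : ZMod 3) := by
        rw [ZMod.natCast_eq_natCast_iff']; omega
      simpa using this
    rw [this]; exact nonsq_two
  · have h1 := ZMod.exists_sq_eq_prime_iff_of_mod_four_eq_three (p := q) (q := 3) (by omega) (by norm_num)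
      (by omega)
    push_cast at h1
    rw [h1]
    have : (q : ZMod 3) = 1 := by
      have : ((q : ℕ) : ZMod 3) = ((1 : ℕ) : ZMod 3) := by
        rw [ZMod.natCast_eq_natCast_iff']; omega
      simpa using this
    rw [this]; simp

theorem nonsq_neg_three {q : ℕ} (hq : q.Prime) (h : q % 12 = 5 ∨ q % 12 = 11) :
    ¬ IsSquare ((-3 : ℤ) : ZMod q) := by
  have : Fact q.Prime := ⟨hq⟩
  have : Fact (Nat.Prime 3) := ⟨by norm_num⟩
  rcases h with h | h
  · intro hh
    apply nonsq_three hq (Or.inl h)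
    have h1 : IsSquare (-1 : ZMod q) := ZMod.exists_sq_eq_neg_one_iff.2 (by omega)
    have := h1.mul hh
    push_cast at this ⊢
    simpa using this
  · have h1 := ZMod.exists_sq_eq_prime_iff_of_mod_four_eq_three (p := q) (q := 3) (by omega) (by norm_num)
      (by omega)
    push_cast at h1
    have h2 : (q : ZMod 3) = 2 := by
      have : ((q : ℕ) : ZMod 3) = ((2 : ℕ) : ZMod 3) := by
        rw [ZMod.natCast_eq_natCast_iff']; omega
      simpa using this
    have h3 : IsSquare (3 : ZMod q) := by
      rw [h1, h2]; exact nonsq_two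
    intro hh
    have h4 : (3 : ZMod q) ≠ 0 := by
      intro h0
      have : ((3 : ℕ) : ZMod q) = 0 := by exact_mod_cast h0
      rw [ZMod.natCast_eq_zero_iff] at this
      have := (Nat.prime_dvd_prime_iff_eq hq (by norm_num)).1 this
      omega
    have h5 : ¬ IsSquare (-1 : ZMod q) := by
      rw [ZMod.exists_sq_eq_neg_one_iff]; omega
    apply h5
    obtain ⟨u, hu⟩ := h3
    obtain ⟨v, hv⟩ := hh
    push_cast at hv
    have hu0 : u ≠ 0 := by rintro rfl; simp at hu; exact h4 hu
    refine ⟨v / u, ?_⟩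
    field_simp
    linear_combination hv + hu

theorem hilb3 {d : ℤ} (hd : d % 3 = 2) {A B Z : ℚ} (hB : B ≠ 0)
    (h : d * (A ^ 2 - 3 * B ^ 2) = Z ^ 2) : False := by
  have hp : Nat.Prime 3 := by norm_num
  have : Fact (Nat.Prime 3) := ⟨hp⟩
  have hd0 : (d : ℚ) ≠ 0 := by
    have : d ≠ 0 := by omega
    exact_mod_cast this
  have hns : ¬ IsSquare (d : ZMod 3) := by
    have : ((d : ℤ) : ZMod 3) = ((2 : ℤ) : ZMod 3) := by
      rw [ZMod.intCast_eq_intCast_iff']; simp [hd]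
    rw [this]; exact_mod_cast nonsq_two
  have e : (d * A) ^ 2 - d * Z ^ 2 = 3 * (d * B) ^ 2 := by rw [← h]; ring
  have hr : (3 : ℚ) * (d * B) ^ 2 ≠ 0 := by positivity
  have h1 := even_val_norm hp hns (d * A) Z (by rw [e]; exact hr)
  rw [e, padicValRat.mul (by norm_num) (by positivity), padicValRat.pow] at h1
  have h3 : padicValRat 3 (3 : ℚ) = 1 := by
    have := padicValRat.self (p := 3) (by norm_num)
    exact_mod_cast this
  rw [h3] at h1
  obtain ⟨k, hk⟩ := h1
  push_cast at hk
  omega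

theorem class_pos {X : ℚ} (hX : 0 < X) (h : ∀ q : ℕ, q.Prime → q ≠ 3 → Even (padicValRat q X)) :
    IsSquare X ∨ IsSquare (3 * X) := by
  have h3 : Nat.Prime 3 := by norm_num
  by_cases he : Even (padicValRat 3 X)
  · left
    apply rat_isSquare_of_even hX
    intro q hq
    by_cases hq3 : q = 3
    · rw [hq3]; exact he
    · exact h q hq hq3
  · right
    apply rat_isSquare_of_even (by positivity)
    intro q hq
    have : Fact q.Prime := ⟨hq⟩
    rw [padicValRat.mul (by norm_num) hX.ne']
    by_cases hq3 : q = 3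
    · subst hq3
      have h4 : padicValRat 3 (3 : ℚ) = 1 := by
        have := padicValRat.self (p := 3) (by norm_num)
        exact_mod_cast this
      rw [h4]
      exact odd_one.add_odd (Int.not_even_iff_odd.1 he)
    · have h4 : padicValRat q (3 : ℚ) = 0 := by
        have : padicValRat q ((3 : ℕ) : ℚ) = 0 := by
          rw [padicValRat.of_nat, padicValNat.eq_zero_of_not_dvd]
          · rfl
          · intro hh; exact hq3 ((Nat.prime_dvd_prime_iff_eq hq h3).1 hh)
        exact_mod_cast this
      rw [h4, zero_add]
      exact h q hq hq3

theorem class_pos_p {X : ℚ} {p : ℕ} (hp : p.Prime) (hX : 0 < X)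
    (h : ∀ q : ℕ, q.Prime → q ≠ 3 → q ≠ p → Even (padicValRat q X)) :
    IsSquare X ∨ IsSquare (3 * X) ∨ IsSquare (p * X) ∨ IsSquare (3 * (p * X)) := by
  have hp0 : (0 : ℚ) < p := by exact_mod_cast hp.pos
  by_cases he : Even (padicValRat p X)
  · rcases class_pos hX (fun q hq hq3 => by
      by_cases hqp : q = p
      · rw [hqp]; exact he
      · exact h q hq hq3 hqp) with h | h
    · exact Or.inl h
    · exact Or.inr (Or.inl h)
  · rcases class_pos (X := p * X) (by positivity) (fun q hq hq3 => by
      have : Fact q.Prime := ⟨hq⟩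
      rw [padicValRat.mul hp0.ne' hX.ne', padicValRat.of_nat]
      by_cases hqp : q = p
      · subst hqp
        rw [padicValNat.self hq.one_lt]
        exact odd_one.add_odd (Int.not_even_iff_odd.1 he)
      · rw [padicValNat.eq_zero_of_not_dvd]
        · simpa using h q hq hq3 hqp
        · intro hh; exact hqp ((Nat.prime_dvd_prime_iff_eq hq hp).1 hh)) with h | h
    · exact Or.inr (Or.inr (Or.inl h))
    · exact Or.inr (Or.inr (Or.inr h))

theorem even_val_three_sq {q : ℕ} (hq : q.Prime) (hq3 : q ≠ 3) {D : ℤ} (hD : D ≠ 0) :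
    Even (padicValRat q (3 * (D : ℚ) ^ 2)) := by
  have : Fact q.Prime := ⟨hq⟩
  have hD' : (D : ℚ) ≠ 0 := by exact_mod_cast hD
  have h4 : padicValRat q (3 : ℚ) = 0 := by
    have : padicValRat q ((3 : ℕ) : ℚ) = 0 := by
      rw [padicValRat.of_nat, padicValNat.eq_zero_of_not_dvd]
      · rfl
      · intro hh; exact hq3 ((Nat.prime_dvd_prime_iff_eq hq (by norm_num)).1 hh)
    exact_mod_cast this
  rw [padicValRat.mul (by norm_num) (by positivity), h4, padicValRat.pow, zero_add]
  exact ⟨padicValRat q D, by push_cast; ring⟩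

theorem e0_cases {D : ℤ} (P : (E0twist D).Point) :
    (P = 0 ∧ al (E0twist D) D P = 1) ∨ (al (E0twist D) D P = 3 * (D : ℚ) ^ 2) ∨
    ∃ x y, ∃ h : (E0twist D).Nonsingular x y, P = .some x y h ∧ al (E0twist D) D P = x - D ∧
      x - D ≠ 0 := by
  rcases P with _ | ⟨x, y, h⟩
  · exact Or.inl ⟨rfl, rfl⟩
  · rw [al_some]
    split_ifs with hx
    · right; left; simp [E0twist]
    · right; right; exact ⟨x, y, h, rfl, rfl, sub_ne_zero.2 hx⟩

theorem e1_cases {D : ℤ} (P : (E1 D).Point) :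
    (P = 0 ∧ al (E1 D) 0 P = 1) ∨ (al (E1 D) 0 P = -(3 * (D : ℚ) ^ 2)) ∨
    ∃ x y, ∃ h : (E1 D).Nonsingular x y, P = .some x y h ∧ al (E1 D) 0 P = x ∧ x ≠ 0 := by
  rcases P with _ | ⟨x, y, h⟩
  · exact Or.inl ⟨rfl, rfl⟩
  · rw [al_some]
    split_ifs with hx
    · right; left; simp [E1]
    · right; right; exact ⟨x, y, h, rfl, by simp, hx⟩

theorem e0_pos {D : ℤ} (hD : D ≠ 0) (P : (E0twist D).Point) : 0 < al (E0twist D) D P := by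
  have hD' : (D : ℚ) ≠ 0 := by exact_mod_cast hD
  rcases e0_cases P with ⟨_, h⟩ | h | ⟨x, y, h, _, h1, h2⟩
  · rw [h]; norm_num
  · rw [h]; positivity
  · rw [h1]
    have hq := E0_eqn h
    by_contra hneg
    have h3 : x - D < 0 := lt_of_le_of_ne (not_lt.1 hneg) h2
    have h4 : 0 < x ^ 2 + x * D + (D : ℚ) ^ 2 := by
      have : 0 < (D : ℚ) ^ 2 := by positivity
      nlinarith [sq_nonneg (2 * x + D)]
    nlinarith [mul_neg_of_neg_of_pos h3 h4, sq_nonneg y]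

theorem three_ndvd {q : ℕ} (hq : q.Prime) (hq3 : q ≠ 3) {D c : ℤ} (hc : c = 3 ∨ c = -3)
    (hqD : ¬ (q : ℤ) ∣ D) : ¬ (q : ℤ) ∣ c * D ^ 2 := by
  have hqi : Prime (q : ℤ) := Nat.prime_iff_prime_int.1 hq
  intro hh
  rcases hqi.dvd_or_dvd hh with h1 | h1
  · have h2 : (q : ℤ) ∣ (3 : ℕ) := by
      rcases hc with rfl | rfl
      · exact_mod_cast h1
      · have := (dvd_neg (a := (q : ℤ)) (b := -3)).2 h1
        rw [neg_neg] at this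
        exact_mod_cast this
    exact hq3 ((Nat.prime_dvd_prime_iff_eq hq (by norm_num)).1 (Int.natCast_dvd_natCast.1 h2))
  · exact hqD (hqi.dvd_of_dvd_pow h1)

theorem e0_even {D : ℤ} (hD : D ≠ 0) {q : ℕ} (hq : q.Prime) (hq3 : q ≠ 3)
    (hqD : (q : ℤ) ∣ D → q % 12 = 5 ∨ q % 12 = 11) (P : (E0twist D).Point) :
    Even (padicValRat q (al (E0twist D) D P)) := by
  have : Fact q.Prime := ⟨hq⟩
  have hD' : (D : ℚ) ≠ 0 := by exact_mod_cast hD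
  rcases e0_cases P with ⟨_, h⟩ | h | ⟨x, y, h, _, h1, h2⟩
  · rw [h]; simp
  · rw [h]; exact even_val_three_sq hq hq3 hD
  · rw [h1]
    have hE := E0_eqn h
    obtain ⟨X, hX⟩ : ∃ X, x - (D : ℚ) = X := ⟨_, rfl⟩
    rw [hX] at h2 ⊢
    have hx : x = X + D := by linarith
    subst hx
    have hN : X ^ 2 + (3 * D : ℤ) * X + (3 * D ^ 2 : ℤ) ≠ 0 := by
      push_cast
      have : 0 < (D : ℚ) ^ 2 := by positivity
      nlinarith [sq_nonneg (2 * X + 3 * D)]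
    have hE2 : y ^ 2 = X * (X ^ 2 + (3 * D : ℤ) * X + (3 * D ^ 2 : ℤ)) := by
      rw [hE]; push_cast; ring
    by_cases hd : (q : ℤ) ∣ D
    · have e : X ^ 2 + (3 * D : ℤ) * X + (3 * D ^ 2 : ℤ) =
          ((2 * X + 3 * D) / 2) ^ 2 - (-3 : ℤ) * ((D : ℚ) / 2) ^ 2 := by push_cast; ring
      have hev := even_val_norm hq (nonsq_neg_three hq (hqD hd)) ((2 * X + 3 * D) / 2) ((D : ℚ) / 2)
        (by rw [← e]; exact hN)
      rw [← e] at hev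
      have hv := congrArg (padicValRat q) hE2
      rw [padicValRat.pow, padicValRat.mul h2 hN] at hv
      obtain ⟨k, hk⟩ := hev
      refine ⟨padicValRat q y - k, ?_⟩
      push_cast at hv hk
      linarith
    · exact even_val_good hq (three_ndvd hq hq3 (Or.inl rfl) hd) h2 hN hE2

theorem e1_norm_ne {D : ℤ} (hD : D ≠ 0) (X : ℚ) : (X - 3 * D) ^ 2 - (3 : ℤ) * (2 * (D : ℚ)) ^ 2 ≠ 0 := by
  have hD' : (D : ℚ) ≠ 0 := by exact_mod_cast hD
  intro h
  have : IsSquare ((3 : ℤ) : ℚ) := ⟨(X - 3 * D) / (2 * D), by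
    field_simp
    push_cast at h ⊢
    linear_combination -h⟩
  rw [Rat.isSquare_intCast_iff] at this
  obtain ⟨r, hr⟩ := this
  have h2 : (r * r) % 4 = 3 := by rw [← hr]; rfl
  rcases (by omega : r % 4 = 0 ∨ r % 4 = 1 ∨ r % 4 = 2 ∨ r % 4 = 3) with h | h | h | h <;>
    simp [Int.mul_emod, h] at h2

theorem e1_even {D : ℤ} (hD : D ≠ 0) {q : ℕ} (hq : q.Prime) (hq3 : q ≠ 3)
    (hqD : (q : ℤ) ∣ D → q % 12 = 5 ∨ q % 12 = 7) (P : (E1 D).Point) :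
    Even (padicValRat q (al (E1 D) 0 P)) := by
  have : Fact q.Prime := ⟨hq⟩
  have hD' : (D : ℚ) ≠ 0 := by exact_mod_cast hD
  rcases e1_cases P with ⟨_, h⟩ | h | ⟨X, y, h, _, h1, h2⟩
  · rw [h]; simp
  · rw [h, padicValRat.neg]; exact even_val_three_sq hq hq3 hD
  · rw [h1]
    have hE := E1_eqn h
    have e : X ^ 2 + (-6 * D : ℤ) * X + (-3 * D ^ 2 : ℤ) =
          (X - 3 * D) ^ 2 - (3 : ℤ) * (2 * (D : ℚ)) ^ 2 := by push_cast; ring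
    have hN := e1_norm_ne hD X
    rw [← e] at hN
    have hE2 : y ^ 2 = X * (X ^ 2 + (-6 * D : ℤ) * X + (-3 * D ^ 2 : ℤ)) := by
      rw [hE]; push_cast; ring
    by_cases hd : (q : ℤ) ∣ D
    · have hev := even_val_norm hq (nonsq_three hq (hqD hd)) _ _ (e1_norm_ne hD X)
      rw [← e] at hev
      have hv := congrArg (padicValRat q) hE2
      rw [padicValRat.pow, padicValRat.mul h2 hN] at hv
      obtain ⟨k, hk⟩ := hev
      refine ⟨padicValRat q y - k, ?_⟩
      push_cast at hv hk
      linarith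
    · exact even_val_good hq (three_ndvd hq hq3 (Or.inr rfl) hd) h2 hN hE2

theorem nonsq_int {d : ℤ} (hd : d % 3 = 2) {U s : ℚ} (hU : U ≠ 0) (h : d * U ^ 2 = s ^ 2) : False := by
  have h1 : IsSquare (d : ℚ) := ⟨s / U, by field_simp; linear_combination h⟩
  rw [Rat.isSquare_intCast_iff] at h1
  obtain ⟨r, hr⟩ := h1
  have h2 : (r * r) % 3 = 2 := by rw [← hr]; exact hd
  rcases (by omega : r % 3 = 0 ∨ r % 3 = 1 ∨ r % 3 = 2) with h | h | h <;>
    simp [Int.mul_emod, h] at h2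

theorem e1_hilb {D : ℤ} (hD : D ≠ 0) {d : ℤ} (hd : d % 3 = 2) (P : (E1 D).Point) :
    ¬ IsSquare (d * al (E1 D) 0 P) := by
  have hD' : (D : ℚ) ≠ 0 := by exact_mod_cast hD
  have hd0 : (d : ℚ) ≠ 0 := by
    have : d ≠ 0 := by omega
    exact_mod_cast this
  rintro ⟨s, hs⟩
  rcases e1_cases P with ⟨_, h⟩ | h | ⟨X, y, h, _, h1, h2⟩
  · rw [h] at hs
    exact nonsq_int hd one_ne_zero (s := s) (by linear_combination hs)
  · rw [h] at hs
    exact hilb3 hd hD' (A := 0) (Z := s) (by linear_combination hs)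
  · rw [h1] at hs
    have hE := E1_eqn h
    have hs0 : s ≠ 0 := by
      rintro rfl
      exact mul_ne_zero hd0 h2 (by simpa using hs)
    refine hilb3 hd (A := X - 3 * D) (B := 2 * D) (Z := d * y / s) (by positivity) ?_
    field_simp
    linear_combination (-((X - 3 * D) ^ 2 - 12 * (D : ℚ) ^ 2)) * hs - d * hE

theorem e1_hilb' {D : ℤ} (hD : D ≠ 0) {d : ℤ} (hd : d % 3 = 2) (P : (E1 D).Point) :
    ¬ IsSquare (-3 * (d * al (E1 D) 0 P)) := by
  have hD' : (D : ℚ) ≠ 0 := by exact_mod_cast hD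
  have hd0 : (d : ℚ) ≠ 0 := by
    have : d ≠ 0 := by omega
    exact_mod_cast this
  rintro ⟨s, hs⟩
  rcases e1_cases P with ⟨_, h⟩ | h | ⟨X, y, h, _, h1, h2⟩
  · rw [h] at hs
    exact hilb3 hd (B := 1) one_ne_zero (A := 0) (Z := s) (by linear_combination hs)
  · rw [h] at hs
    exact nonsq_int hd (U := 3 * D) (by positivity) (s := s) (by linear_combination hs)
  · rw [h1] at hs
    have hE := E1_eqn h
    have hs0 : s ≠ 0 := by
      rintro rfl
      exact mul_ne_zero hd0 h2 (by simpa using hs)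
    have key : d * ((6 * (D : ℚ)) ^ 2 - 3 * (X - 3 * D) ^ 2) = (3 * d * y / s) ^ 2 := by
      field_simp
      linear_combination (3 * ((X - 3 * D) ^ 2 - 12 * (D : ℚ) ^ 2)) * hs - 9 * d * hE
    by_cases hA : X - 3 * D = 0
    · rw [hA] at key
      exact nonsq_int hd (U := 6 * D) (by positivity) (s := 3 * d * y / s) (by linear_combination key)
    · exact hilb3 hd hA key

theorem e0_ker {D : ℤ} (hD : D ≠ 0) (P : (E0twist D).Point) (h : IsSquare (al (E0twist D) D P)) :
    ∃ P', iso hD P' = P := by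
  obtain ⟨s, hs⟩ := h
  rcases e0_cases P with ⟨h0, _⟩ | h | ⟨x, y, h, hP, h1, h2⟩
  · exact ⟨0, by rw [h0, iso_zero]⟩
  · exfalso
    rw [h] at hs
    apply e1_norm_ne hD (3 * D + 2 * s)
    push_cast
    linear_combination -4 * hs
  · rw [h1] at hs
    rw [hP]
    refine exists_iso_eq hD h (r := s) ?_ (by rw [hs]; ring)
    rintro rfl
    exact h2 (by simpa using hs)

theorem e1_ker {D : ℤ} (hD : D ≠ 0) (P : (E1 D).Point) (h : IsSquare (al (E1 D) 0 P)) :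
    ∃ R, iso hD P = 2 • R := by
  have hD' : (D : ℚ) ≠ 0 := by exact_mod_cast hD
  obtain ⟨s, hs⟩ := h
  rcases e1_cases P with ⟨h0, _⟩ | h | ⟨x, y, h, hP, h1, h2⟩
  · exact ⟨0, by rw [h0, iso_zero]; simp⟩
  · exfalso
    rw [h] at hs
    have : 0 < (D : ℚ) ^ 2 := by positivity
    nlinarith [mul_self_nonneg s]
  · rw [h1] at hs
    rw [hP]
    refine iso_eq_two_smul hD h (r := s) ?_ (by rw [hs]; ring)
    rintro rfl
    exact h2 (by simpa using hs)

theorem sq_cancel {a b : ℚ} (ha : a ≠ 0) (h : IsSquare (a * b)) (h' : IsSquare a) : IsSquare b := by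
  have := h.div h'
  rwa [mul_div_cancel_left₀ _ ha] at this

theorem sq_of_eq {a b : ℚ} (h : IsSquare a) (e : b = a) : IsSquare b := e ▸ h

theorem coset_two {G : Type} [AddCommGroup G] (f : G → ℚ) (hf : ∀ P, f P ≠ 0)
    (hadd : ∀ P Q, IsSquare (f P * f Q * f (P + Q))) {t : ℚ} {T : G}
    (hT : IsSquare (t * f T)) (h : ∀ P, IsSquare (f P) ∨ IsSquare (t * f P)) (ht : t ≠ 0) (P : G) :
    IsSquare (f P) ∨ IsSquare (f (P + T)) := by
  rcases h P with h | h
  · exact Or.inl h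
  · right
    have h1 := (hadd P T).mul (h.mul hT)
    refine sq_cancel (a := (t * f P * f T) ^ 2) ?_ ?_ (IsSquare.sq _)
    · exact pow_ne_zero 2 (mul_ne_zero (mul_ne_zero ht (hf P)) (hf T))
    · exact sq_of_eq (h1) (by ring)

theorem coset_four {G : Type} [AddCommGroup G] (f : G → ℚ) (hf : ∀ P, f P ≠ 0)
    (hadd : ∀ P Q, IsSquare (f P * f Q * f (P + Q))) {t δ : ℚ} {T : G}
    (hT : IsSquare (t * f T)) (ht : t ≠ 0) (hδ : δ ≠ 0)
    (h : ∀ P, IsSquare (f P) ∨ IsSquare (t * f P) ∨ IsSquare (δ * f P) ∨ IsSquare (t * (δ * f P))) :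
    ∃ P₀ : G, ∀ P, ∃ s, (s = 0 ∨ s = P₀) ∧ (IsSquare (f (P + s)) ∨ IsSquare (f (P + s + T))) := by
  have main : ∃ P₀ : G, ∀ P, ∃ s, (s = 0 ∨ s = P₀) ∧
      (IsSquare (f (P + s)) ∨ IsSquare (t * f (P + s))) := by
    by_cases hex : ∃ P₀, IsSquare (δ * f P₀) ∨ IsSquare (t * (δ * f P₀))
    · obtain ⟨P₀, hP₀⟩ := hex
      refine ⟨P₀, fun P => ?_⟩
      have c1 : ∀ c : ℚ, IsSquare (c * (f P * f P₀)) → IsSquare (c * f (P + P₀)) := by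
        intro c hc
        refine sq_cancel (a := (f P * f P₀) ^ 2) ?_ ?_ (IsSquare.sq _)
        · exact pow_ne_zero 2 (mul_ne_zero (hf _) (hf _))
        · exact sq_of_eq (hc.mul (hadd P P₀)) (by ring)
      have d2 : δ ^ 2 ≠ 0 := pow_ne_zero 2 hδ
      have t2 : (t * δ) ^ 2 ≠ 0 := pow_ne_zero 2 (mul_ne_zero ht hδ)
      rcases h P with h | h | h | h
      · exact ⟨0, Or.inl rfl, Or.inl (by simpa using h)⟩
      · exact ⟨0, Or.inl rfl, Or.inr (by simpa using h)⟩
      · refine ⟨P₀, Or.inr rfl, ?_⟩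
        rcases hP₀ with h0 | h0
        · left
          have := c1 1 (sq_cancel d2 (sq_of_eq (h.mul h0) (by ring)) (IsSquare.sq _))
          simpa using this
        · right
          exact c1 t (sq_cancel d2 (sq_of_eq (h.mul h0) (by ring)) (IsSquare.sq _))
      · refine ⟨P₀, Or.inr rfl, ?_⟩
        rcases hP₀ with h0 | h0
        · right
          exact c1 t (sq_cancel d2 (sq_of_eq (h.mul h0) (by ring)) (IsSquare.sq _))
        · left
          have := c1 1 (sq_cancel t2 (sq_of_eq (h.mul h0) (by ring)) (IsSquare.sq _))
          simpa using this
    · refine ⟨0, fun P => ⟨0, Or.inl rfl, ?_⟩⟩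
      rw [add_zero]
      rcases h P with h | h | h | h
      · exact Or.inl h
      · exact Or.inr h
      · exact absurd ⟨P, Or.inl h⟩ hex
      · exact absurd ⟨P, Or.inr h⟩ hex
  obtain ⟨P₀, hP₀⟩ := main
  refine ⟨P₀, fun P => ?_⟩
  obtain ⟨s, hs, h1⟩ := hP₀ P
  refine ⟨s, hs, ?_⟩
  rcases h1 with h | h
  · exact Or.inl h
  · right
    have h1 := (hadd (P + s) T).mul (h.mul hT)
    refine sq_cancel (a := (t * f (P + s) * f T) ^ 2) ?_ ?_ (IsSquare.sq _)
    · exact pow_ne_zero 2 (mul_ne_zero (mul_ne_zero ht (hf _)) (hf T))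
    · exact sq_of_eq (h1) (by ring)

/-- The elements which are linearly dependent on `P₀`. -/
def depSub {G : Type} [AddCommGroup G] (P₀ : G) : AddSubgroup G where
  carrier := {g | ∃ n m : ℤ, n ≠ 0 ∧ n • g = m • P₀}
  zero_mem' := ⟨1, 0, one_ne_zero, by simp⟩
  add_mem' := by
    rintro a b ⟨n, m, hn, h1⟩ ⟨n', m', hn', h2⟩
    refine ⟨n * n', n' * m + n * m', mul_ne_zero hn hn', ?_⟩
    rw [smul_add, add_smul, mul_smul n' m, ← h1, mul_smul n m', ← h2, smul_smul, smul_smul,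
      mul_comm n' n]
  neg_mem' := by
    rintro a ⟨n, m, hn, h1⟩
    exact ⟨n, -m, hn, by rw [smul_neg, h1, neg_smul]⟩

theorem depSub_two {G : Type} [AddCommGroup G] (P₀ : G) {T : G} (hT : T + T = 0) : T ∈ depSub P₀ :=
  ⟨2, 0, by norm_num, by rw [two_smul, hT, zero_smul]⟩

theorem depSub_self {G : Type} [AddCommGroup G] (P₀ : G) : P₀ ∈ depSub P₀ :=
  ⟨1, 1, one_ne_zero, rfl⟩

theorem depSub_of_smul {G : Type} [AddCommGroup G] (P₀ : G) {n : ℕ} (hn : n ≠ 0) {Q : G}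
    (h : n • Q ∈ depSub P₀) : ∃ n m : ℤ, n ≠ 0 ∧ n • Q = m • P₀ := by
  obtain ⟨n', m, hn', hm⟩ := h
  refine ⟨n' * n, m, mul_ne_zero hn' (by exact_mod_cast hn), ?_⟩
  rw [mul_smul, natCast_zsmul, hm]

/-- If all points of `E0twist D` are in four cosets of twice the group, the rank is at most one. -/
theorem rank_of_cosets {D : ℤ} (hD : D ≠ 0) (T P₀ : (E0twist D).Point) (hT : T + T = 0)
    (h : ∀ Q : (E0twist D).Point, ∃ a b, (a = 0 ∨ a = T) ∧ (b = 0 ∨ b = P₀) ∧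
      ∃ R, Q + a + b = 2 • R) : mwRank (E0twist D) ≤ 1 := by
  let H := depSub P₀
  have hTH : T ∈ H := depSub_two P₀ hT
  have hPH : P₀ ∈ H := depSub_self P₀
  obtain ⟨C, hC⟩ := ht_parallelogram hD
  apply rank_le_one_of_dep P₀
  intro Q
  have hd := descent ht ht_zero ht_nonneg ht_finite C hC H
    {0, -T, -P₀, -(T + P₀)} (Set.toFinite _) (by
      intro s hs
      simp only [Set.mem_insert_iff, Set.mem_singleton_iff] at hs
      rcases hs with rfl | rfl | rfl | rfl
      · exact H.zero_mem
      · exact H.neg_mem hTH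
      · exact H.neg_mem hPH
      · exact H.neg_mem (H.add_mem hTH hPH)) (by
      intro Q
      obtain ⟨a, b, ha, hb, R, hR⟩ := h Q
      refine ⟨-(a + b), ?_, R, by rw [← hR]; abel⟩
      simp only [Set.mem_insert_iff, Set.mem_singleton_iff]
      rcases ha with rfl | rfl <;> rcases hb with rfl | rfl <;> simp) Q
  obtain ⟨n, hn, hm⟩ := hd
  exact depSub_of_smul P₀ hn hm

noncomputable def T0 {D : ℤ} (hD : D ≠ 0) : (E0twist D).Point := .some D 0 (E0_nonsing hD (by ring))
noncomputable def T1 {D : ℤ} (hD : D ≠ 0) : (E1 D).Point := .some 0 0 (E1_nonsing hD (by ring))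

theorem T0_two {D : ℤ} (hD : D ≠ 0) : T0 hD + T0 hD = 0 := by
  apply Point.add_self_of_Y_eq
  simp [negY, E0twist]

theorem al_T0 {D : ℤ} (hD : D ≠ 0) : IsSquare (3 * al (E0twist D) D (T0 hD)) := by
  rw [T0, al_some, if_pos rfl]
  exact ⟨3 * D, by simp [E0twist]; ring⟩

theorem al_T1 {D : ℤ} (hD : D ≠ 0) : IsSquare (-3 * al (E1 D) 0 (T1 hD)) := by
  rw [T1, al_some, if_pos rfl]
  exact ⟨3 * D, by simp [E1]; ring⟩

theorem iso_T1 {D : ℤ} (hD : D ≠ 0) : iso hD (T1 hD) = 0 := iso_T hD _ rfl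

theorem d0_ne {D : ℤ} (hD : D ≠ 0) : 3 * (D : ℚ) ^ 2 + 2 * (E0twist D).a₂ * D + (E0twist D).a₄ ≠ 0 := by
  have hD' : (D : ℚ) ≠ 0 := by exact_mod_cast hD
  simp [E0twist, hD]

theorem d1_ne {D : ℤ} (hD : D ≠ 0) : 3 * (0 : ℚ) ^ 2 + 2 * (E1 D).a₂ * 0 + (E1 D).a₄ ≠ 0 := by
  have hD' : (D : ℚ) ≠ 0 := by exact_mod_cast hD
  simp [E1, hD]

theorem al0_add {D : ℤ} (hD : D ≠ 0) (P Q : (E0twist D).Point) :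
    IsSquare (al (E0twist D) D P * al (E0twist D) D Q * al (E0twist D) D (P + Q)) :=
  al_add rfl rfl (by simp [E0twist]) (d0_ne hD) P Q

theorem al1_add {D : ℤ} (hD : D ≠ 0) (P Q : (E1 D).Point) :
    IsSquare (al (E1 D) 0 P * al (E1 D) 0 Q * al (E1 D) 0 (P + Q)) :=
  al_add rfl rfl (by simp [E1]) (d1_ne hD) P Q

theorem caseA {D : ℤ} (hD : D ≠ 0) {δ : ℚ} (hδ : δ ≠ 0)
    (h0 : ∀ P, IsSquare (al (E0twist D) D P) ∨ IsSquare (3 * al (E0twist D) D P))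
    (h1 : ∀ P, IsSquare (al (E1 D) 0 P) ∨ IsSquare (-3 * al (E1 D) 0 P) ∨
      IsSquare (δ * al (E1 D) 0 P) ∨ IsSquare (-3 * (δ * al (E1 D) 0 P))) :
    mwRank (E0twist D) ≤ 1 := by
  obtain ⟨P₀, hP₀⟩ := coset_four _ (al_ne_zero (d1_ne hD)) (al1_add hD) (al_T1 hD) (by norm_num) hδ h1
  refine rank_of_cosets hD (T0 hD) (iso hD P₀) (T0_two hD) fun Q => ?_
  have h2 : ∃ a, (a = 0 ∨ a = T0 hD) ∧ ∃ P', iso hD P' = Q + a := by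
    rcases coset_two _ (al_ne_zero (d0_ne hD)) (al0_add hD) (al_T0 hD) h0 (by norm_num) Q with h | h
    · exact ⟨0, Or.inl rfl, by rw [add_zero]; exact e0_ker hD _ h⟩
    · exact ⟨_, Or.inr rfl, e0_ker hD _ h⟩
  obtain ⟨a, ha, P', hP'⟩ := h2
  obtain ⟨s, hs, h3⟩ := hP₀ P'
  refine ⟨a, iso hD s, ha, ?_, ?_⟩
  · rcases hs with rfl | rfl
    · exact Or.inl (iso_zero hD)
    · exact Or.inr rfl
  · rw [← hP', ← iso_add]
    rcases h3 with h | h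
    · exact e1_ker hD _ h
    · obtain ⟨R, hR⟩ := e1_ker hD _ h
      rw [iso_add, iso_T1, add_zero] at hR
      exact ⟨R, hR⟩

theorem caseB {D : ℤ} (hD : D ≠ 0) {δ : ℚ} (hδ : δ ≠ 0)
    (h0 : ∀ P, IsSquare (al (E0twist D) D P) ∨ IsSquare (3 * al (E0twist D) D P) ∨
      IsSquare (δ * al (E0twist D) D P) ∨ IsSquare (3 * (δ * al (E0twist D) D P)))
    (h1 : ∀ P, IsSquare (al (E1 D) 0 P) ∨ IsSquare (-3 * al (E1 D) 0 P)) :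
    mwRank (E0twist D) ≤ 1 := by
  obtain ⟨P₀, hP₀⟩ := coset_four _ (al_ne_zero (d0_ne hD)) (al0_add hD) (al_T0 hD) (by norm_num) hδ h0
  refine rank_of_cosets hD (T0 hD) P₀ (T0_two hD) fun Q => ?_
  obtain ⟨s, hs, h3⟩ := hP₀ Q
  have h2 : ∃ a, (a = 0 ∨ a = T0 hD) ∧ ∃ P', iso hD P' = Q + a + s := by
    rcases h3 with h | h
    · exact ⟨0, Or.inl rfl, by rw [add_zero]; exact e0_ker hD _ h⟩
    · refine ⟨_, Or.inr rfl, ?_⟩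
      rw [add_right_comm]
      exact e0_ker hD _ h
  obtain ⟨a, ha, P', hP'⟩ := h2
  refine ⟨a, s, ha, hs, ?_⟩
  rw [← hP']
  rcases coset_two _ (al_ne_zero (d1_ne hD)) (al1_add hD) (al_T1 hD) h1 (by norm_num) P' with h | h
  · exact e1_ker hD _ h
  · obtain ⟨R, hR⟩ := e1_ker hD _ h
    rw [iso_add, iso_T1, add_zero] at hR
    exact ⟨R, hR⟩

theorem class_sgn {X : ℚ} (hX : X ≠ 0) (h : ∀ q : ℕ, q.Prime → q ≠ 3 → Even (padicValRat q X)) :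
    IsSquare X ∨ IsSquare (3 * X) ∨ IsSquare (-X) ∨ IsSquare (-3 * X) := by
  rcases lt_or_gt_of_ne hX with h1 | h1
  · rcases class_pos (X := -X) (by linarith) (by simpa using h) with h | h
    · exact Or.inr (Or.inr (Or.inl h))
    · exact Or.inr (Or.inr (Or.inr (by convert h using 1; ring)))
  · rcases class_pos h1 h with h | h
    · exact Or.inl h
    · exact Or.inr (Or.inl h)

theorem twist_rank_le_one (D : ℤ) (hD0 : D ≠ 0) (hDsf : Squarefree D)
    (hcond : (∀ p : ℕ, p.Prime → (p : ℤ) ∣ D → p % 12 = 5) ∨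
      (∃ p₀ : ℕ, p₀.Prime ∧ (p₀ : ℤ) ∣ D ∧ p₀ % 4 = 3 ∧
        ∀ p : ℕ, p.Prime → (p : ℤ) ∣ D → p ≠ p₀ → p % 12 = 5)) :
    mwRank (E0twist D) ≤ 1 := by
  -- the situation where every prime factor other than 3 is 5 mod 12
  have easy : (∀ p : ℕ, p.Prime → p ≠ 3 → (p : ℤ) ∣ D → p % 12 = 5) → mwRank (E0twist D) ≤ 1 := by
    intro hp
    refine caseA hD0 (δ := -1) (by norm_num)
      (fun P => class_pos (e0_pos hD0 P)
        fun q hq hq3 => e0_even hD0 hq hq3 (fun hd => Or.inl (hp q hq hq3 hd)) P)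
      (fun P => ?_)
    rcases class_sgn (al_ne_zero (d1_ne hD0) P)
        (fun q hq hq3 => e1_even hD0 hq hq3 (fun hd => Or.inl (hp q hq hq3 hd)) P) with h | h | h | h
    · exact Or.inl h
    · right; right; right; convert h using 1; ring
    · right; right; left; convert h using 1; ring
    · right; left; exact h
  rcases hcond with hp | ⟨p₀, hp₀, hdvd, hmod, hp⟩
  · exact easy fun p hpp _ hd => hp p hpp hd
  by_cases h3 : p₀ = 3
  · subst h3
    exact easy fun p hpp hp3 hd => hp p hpp hd hp3
  have hmod3 : p₀ % 3 ≠ 0 := by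
    intro hh
    exact h3 ((Nat.prime_dvd_prime_iff_eq (by norm_num) hp₀).1 (Nat.dvd_of_mod_eq_zero hh)).symm
  have hp₀' : (p₀ : ℚ) ≠ 0 := by exact_mod_cast hp₀.ne_zero
  rcases (by omega : p₀ % 12 = 7 ∨ p₀ % 12 = 11) with h12 | h12
  · refine caseB hD0 hp₀' (fun P => class_pos_p hp₀ (e0_pos hD0 P)
        fun q hq hq3 hqp => e0_even hD0 hq hq3 (fun hd => Or.inl (hp q hq hd hqp)) P) (fun P => ?_)
    have hex1 := e1_hilb hD0 (d := -1) (by norm_num) P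
    have hex2 := e1_hilb' hD0 (d := -1) (by norm_num) P
    rcases class_sgn (al_ne_zero (d1_ne hD0) P)
        (fun q hq hq3 => e1_even hD0 hq hq3 (fun hd => by
          by_cases hqp : q = p₀
          · rw [hqp]; exact Or.inr h12
          · exact Or.inl (hp q hq hd hqp)) P) with h | h | h | h
    · exact Or.inl h
    · exact absurd (by convert h using 1; push_cast; ring) hex2
    · exact absurd (by convert h using 1; push_cast; ring) hex1
    · exact Or.inr h
  · refine caseA hD0 (δ := -p₀) (neg_ne_zero.2 hp₀')
      (fun P => class_pos (e0_pos hD0 P)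
        fun q hq hq3 => e0_even hD0 hq hq3 (fun hd => by
          by_cases hqp : q = p₀
          · rw [hqp]; exact Or.inr h12
          · exact Or.inl (hp q hq hd hqp)) P)
      (fun P => ?_)
    have hex1 := e1_hilb hD0 (d := -1) (by norm_num) P
    have hex2 := e1_hilb' hD0 (d := -1) (by norm_num) P
    have hex3 := e1_hilb hD0 (d := p₀) (by omega) P
    have hex4 := e1_hilb' hD0 (d := p₀) (by omega) P
    have hev : ∀ q : ℕ, q.Prime → q ≠ 3 → q ≠ p₀ → Even (padicValRat q (al (E1 D) 0 P)) :=
      fun q hq hq3 hqp => e1_even hD0 hq hq3 (fun hd => Or.inl (hp q hq hd hqp)) P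
    rcases lt_or_gt_of_ne (al_ne_zero (d1_ne hD0) P) with h1 | h1
    · rcases class_pos_p hp₀ (X := -al (E1 D) 0 P) (by linarith) (by simpa using hev)
        with h | h | h | h
      · exact absurd (by convert h using 1; push_cast; ring) hex1
      · right; left; convert h using 1; ring
      · right; right; left; convert h using 1; ring
      · exact absurd (by convert h using 1; push_cast; ring) hex4
    · rcases class_pos_p hp₀ h1 hev with h | h | h | h
      · exact Or.inl h
      · exact absurd (by convert h using 1; push_cast; ring) hex2
      · exact absurd (by convert h using 1; push_cast; ring) hex3
      · right; right; right; convert h using 1; ring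
end

section
/- For every prime p with p ≡ 5 (mod 12) or p ≡ 11 (mod 12), the rank of the elliptic curve y² = x³ − p³ over ℚ is at most 1. -/
open TensorProduct

/-- The eight possible square classes. -/
def IsClass (p g : ℤ) : Prop :=
  g = 1 ∨ g = 3 ∨ g = p ∨ g = 3 * p ∨ g = -1 ∨ g = -3 ∨ g = -p ∨ g = -(3 * p)

lemma IsClass.neg {p g : ℤ} (h : IsClass p g) : IsClass p (-g) := by
  unfold IsClass at *
  rcases h with h | h | h | h | h | h | h | h <;> subst h <;> simp

lemma class_of_dvd {p : ℕ} (hp : p.Prime) {d : ℕ} (hd : d ∣ 3 * p ^ 2) :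
    ∃ g r : ℤ, IsClass p g ∧ (d : ℤ) = g * r ^ 2 := by
  obtain ⟨k₁, k₂, h1, h2, rfl⟩ := (Nat.dvd_mul).1 hd
  obtain ⟨m, hm, rfl⟩ := (Nat.dvd_prime_pow hp).1 h2
  have h3 : k₁ = 1 ∨ k₁ = 3 := (Nat.dvd_prime Nat.prime_three).1 h1
  unfold IsClass
  interval_cases m <;> rcases h3 with rfl | rfl
  · exact ⟨1, 1, by simp, by simp⟩
  · exact ⟨3, 1, by simp, by simp⟩
  · exact ⟨p, 1, by simp, by simp⟩
  · exact ⟨3 * p, 1, by simp, by simp⟩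
  · exact ⟨1, p, by simp, by simp⟩
  · exact ⟨3, p, by simp, by simp⟩

lemma sq_decomp {p : ℕ} (hp : p.Prime) {A C w : ℤ} (hA : A ≠ 0) (h : A * C = w ^ 2)
    (hg : Int.gcd A C ∣ 3 * p ^ 2) :
    ∃ g a c : ℤ, IsClass p g ∧ A = g * a ^ 2 ∧ C = g * c ^ 2 := by
  obtain ⟨g, r, hgc, hgr⟩ := class_of_dvd hp hg
  have hd : (Int.gcd A C : ℤ) ≠ 0 := by
    intro h0
    exact hA (Int.gcd_eq_zero_iff.1 (by exact_mod_cast h0)).1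
  obtain ⟨A', hA'⟩ := Int.gcd_dvd_left A C
  obtain ⟨C', hC'⟩ := Int.gcd_dvd_right A C
  have hcop : IsCoprime A' C' := by
    have := Int.gcd_eq_gcd_ab A C
    refine ⟨Int.gcdA A C, Int.gcdB A C, ?_⟩
    apply mul_left_cancel₀ hd
    set d : ℤ := (Int.gcd A C : ℤ) with hdd
    set u := Int.gcdA A C
    set v := Int.gcdB A C
    calc d * (u * A' + v * C') = (d * A') * u + (d * C') * v := by ring
      _ = A * u + C * v := by rw [← hA', ← hC']
      _ = d * 1 := by rw [← this]; ring
  set d : ℤ := (Int.gcd A C : ℤ) with hdd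
  have hw : d ∣ w := by
    have : d ^ 2 ∣ w ^ 2 := ⟨A' * C', by rw [← h]; nth_rw 1 [hA', hC']; ring⟩
    exact (Int.pow_dvd_pow_iff (by norm_num)).1 this
  obtain ⟨w', hw'⟩ := hw
  have h' : A' * C' = w' ^ 2 := by
    apply mul_left_cancel₀ (pow_ne_zero 2 hd)
    calc d ^ 2 * (A' * C') = (d * A') * (d * C') := by ring
      _ = A * C := by rw [← hA', ← hC']
      _ = _ := by rw [h, hw']; ring
  have hA'0 : A' ≠ 0 := by rintro rfl; simp at hA'; exact hA hA'
  obtain ⟨a, ha⟩ := Int.sq_of_isCoprime hcop h'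
  obtain ⟨c, hc⟩ := Int.sq_of_isCoprime hcop.symm (by rw [mul_comm]; exact h')
  have key : ∃ e : ℤ, (e = 1 ∨ e = -1) ∧ A' = e * a ^ 2 ∧ C' = e * c ^ 2 := by
    by_cases hc0 : C' = 0
    · have : c = 0 := by 
        rcases hc with h | h <;> rw [hc0] at h <;>
          exact (pow_eq_zero_iff two_ne_zero).1 (by linarith)
      subst this
      rcases ha with h | h
      · exact ⟨1, by simp, by simp [h], by simp [hc0]⟩
      · exact ⟨-1, by simp, by simp [h], by simp [hc0]⟩
    have hpos : 0 < A' * C' := lt_of_le_of_ne (h' ▸ sq_nonneg w') (mul_ne_zero hA'0 hc0).symm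
    rcases ha with h1 | h1 <;> rcases hc with h2 | h2
    · exact ⟨1, by simp, by simp [h1], by simp [h2]⟩
    · rw [h1, h2] at hpos; nlinarith [mul_nonneg (sq_nonneg a) (sq_nonneg c)]
    · rw [h1, h2] at hpos; nlinarith [mul_nonneg (sq_nonneg a) (sq_nonneg c)]
    · exact ⟨-1, by simp, by simp [h1], by simp [h2]⟩
  obtain ⟨e, he, hAe, hCe⟩ := key
  refine ⟨e * g, r * a, r * c, ?_, ?_, ?_⟩
  · rcases he with rfl | rfl
    · simpa using hgc
    · simpa using hgc.neg
  · rw [hA', hgr, hAe]; ring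
  · rw [hC', hgr, hCe]; ring

lemma rat_decomp {p : ℕ} (hp : p.Prime) {k l : ℤ} (hl : l ∣ 3 * p ^ 2) {t w : ℚ} (ht : t ≠ 0)
    (h : t * (t ^ 2 + k * t + l) = w ^ 2) :
    ∃ g a b c : ℤ, IsClass p g ∧ b ≠ 0 ∧ IsCoprime a b ∧ t = g * (a / b) ^ 2 ∧
      g * c ^ 2 = g ^ 2 * a ^ 4 + k * g * a ^ 2 * b ^ 2 + l * b ^ 4 := by
  set A := t.num with hA
  set B : ℤ := (t.den : ℤ) with hB
  have hBpos : 0 < B := by simp [hB, t.den_pos]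
  have hB0 : (B : ℚ) ≠ 0 := by exact_mod_cast hBpos.ne'
  have htAB : t = A / B := by rw [hA, hB]; exact_mod_cast (Rat.num_div_den t).symm
  have hcop : IsCoprime A B := by
    rw [Int.isCoprime_iff_gcd_eq_one]; simpa [hA, hB, Int.gcd] using t.reduced
  have hA0 : A ≠ 0 := by simpa [hA] using ht
  set C := A ^ 2 + k * A * B + l * B ^ 2 with hC
  have hsq : IsSquare ((B * (A * C) : ℤ) : ℚ) := by
    refine ⟨w * B ^ 2, ?_⟩
    have : w * B ^ 2 * (w * B ^ 2) = w ^ 2 * B ^ 4 := by ring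
    rw [this, ← h, htAB, hC]
    push_cast
    field_simp
  rw [Rat.isSquare_intCast_iff] at hsq
  obtain ⟨n, hn⟩ := hsq
  have hBC : IsCoprime B C := by
    have h1 : IsCoprime B (A ^ 2) := hcop.symm.pow_right
    have : C = A ^ 2 + B * (k * A + l * B) := by rw [hC]; ring
    rw [this]; exact h1.add_mul_left_right _
  have hBAC : IsCoprime B (A * C) := hcop.symm.mul_right hBC
  have hn' : B * (A * C) = n ^ 2 := by rw [hn]; ring
  obtain ⟨b, hb⟩ := Int.sq_of_isCoprime hBAC hn'
  have hb : B = b ^ 2 := by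
    rcases hb with h | h
    · exact h
    · nlinarith [sq_nonneg b]
  obtain ⟨m, hm⟩ := Int.sq_of_isCoprime hBAC.symm (by rw [mul_comm]; exact hn')
  have hm : A * C = m ^ 2 := by
    rcases hm with h | h
    · exact h
    · have : 0 ≤ A * C := by
        by_contra hneg
        push Not at hneg
        nlinarith [sq_nonneg n, mul_pos hBpos (neg_pos.2 hneg)]
      have h0 : m ^ 2 = 0 := by nlinarith [sq_nonneg m]
      rw [h, h0]; simp
  have hg : Int.gcd A C ∣ 3 * p ^ 2 := by
    have h1 : (Int.gcd A C : ℤ) ∣ l * B ^ 2 := by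
      have : l * B ^ 2 = C - A * (A + k * B) := by rw [hC]; ring
      rw [this]
      exact dvd_sub (Int.gcd_dvd_right ..) ((Int.gcd_dvd_left ..).mul_right _)
    have h2 : IsCoprime (Int.gcd A C : ℤ) (B ^ 2) :=
      (hcop.of_isCoprime_of_dvd_left (Int.gcd_dvd_left ..)).pow_right
    have h3 := (h2.dvd_of_dvd_mul_right h1).trans hl
    exact_mod_cast h3
  obtain ⟨g, a, c, hgc, h1, h2⟩ := sq_decomp hp hA0 hm hg
  have hb0 : b ≠ 0 := by rintro rfl; simp at hb; omega
  refine ⟨g, a, b, c, hgc, hb0, ?_, ?_, ?_⟩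
  · rw [h1, hb] at hcop
    have := hcop.of_mul_left_right
    exact (IsCoprime.pow_iff (by norm_num) (by norm_num)).1 this
  · rw [htAB, h1, hb]; push_cast; field_simp
  · rw [← h2, hC, h1, hb]; ring

lemma three_dvd_of_sq {a c : ℤ} (h : (3 : ℤ) ∣ a ^ 4 + c ^ 2) : 3 ∣ a ∧ 3 ∣ c := by
  have ha : a % 3 = 0 ∨ a % 3 = 1 ∨ a % 3 = 2 := by omega
  have hc : c % 3 = 0 ∨ c % 3 = 1 ∨ c % 3 = 2 := by omega
  have h' := Int.emod_eq_zero_of_dvd h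
  rcases ha with ha | ha | ha <;> rcases hc with hc | hc | hc <;>
    simp [pow_succ, Int.add_emod, Int.mul_emod, ha, hc] at h' <;> omega

/-- 3-adic obstruction. -/
lemma no_sol {a b c s e f : ℤ} (hab : IsCoprime a b) (hs : s % 3 = 2) (hf : ¬ 3 ∣ f)
    (h : s * c ^ 2 = a ^ 4 + 3 * e * a ^ 2 * b ^ 2 + 3 * f * b ^ 4) : False := by
  have h1 : (3 : ℤ) ∣ a ^ 4 + c ^ 2 := by
    have : a ^ 4 + c ^ 2 = (s + 1) * c ^ 2 - 3 * (e * a ^ 2 * b ^ 2 + f * b ^ 4) := by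
      linear_combination -h
    rw [this]
    exact dvd_sub (Dvd.dvd.mul_right (by omega) _) (Dvd.intro _ rfl)
  obtain ⟨⟨a', rfl⟩, ⟨c', rfl⟩⟩ := three_dvd_of_sq h1
  have h2 : (3 : ℤ) ∣ f * b ^ 4 := by
    refine ⟨s * c' ^ 2 - 9 * a' ^ 4 - 3 * e * a' ^ 2 * b ^ 2, ?_⟩
    linarith
  have h3 : (3 : ℤ) ∣ b := by
    rcases Int.prime_three.dvd_or_dvd h2 with h | h
    · exact absurd h hf
    · exact Int.prime_three.dvd_of_dvd_pow h
  have := hab.isUnit_of_dvd' (Dvd.intro _ rfl : (3 : ℤ) ∣ 3 * a') h3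
  exact absurd this (by decide)

lemma three_dvd_helper {p : ℤ} (h : p % 3 = 2) : ¬ (3 : ℤ) ∣ p := by omega

/-- first descent -/
lemma classE {p : ℕ} (hp : p.Prime) (h3 : p % 3 = 2) {t w : ℚ} (ht : 0 < t)
    (h : t * (t ^ 2 + 3 * p * t + 3 * p ^ 2) = w ^ 2) : IsSquare t ∨ IsSquare (3 * t) := by
  have h3' : (p : ℤ) % 3 = 2 := by omega
  have hp0 : (p : ℤ) ≠ 0 := by exact_mod_cast hp.ne_zero
  have hpp : Prime (p : ℤ) := Nat.prime_iff_prime_int.1 hp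
  obtain ⟨g, a, b, c, hg, hb, hab, htg, heq⟩ :=
    rat_decomp (k := 3 * p) (l := 3 * p ^ 2) hp dvd_rfl ht.ne' (by push_cast; exact h)
  have hgpos : 0 < g := by
    have h1 : (0 : ℚ) < g * (a / b) ^ 2 := htg ▸ ht
    have : (0 : ℚ) < g := by
      by_contra hneg
      push Not at hneg
      nlinarith [sq_nonneg ((a : ℚ) / b)]
    exact_mod_cast this
  have hp1 : (0 : ℤ) < p := by exact_mod_cast hp.pos
  rcases hg with rfl | rfl | rfl | rfl | rfl | rfl | rfl | rfl
  · left; exact ⟨a / b, by rw [htg]; push_cast; ring⟩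
  · right; exact ⟨3 * (a / b), by rw [htg]; push_cast; ring⟩
  · exfalso
    have h1 : c ^ 2 = p * (a ^ 4 + 3 * a ^ 2 * b ^ 2 + 3 * b ^ 4) := by
      apply mul_left_cancel₀ hp0; linear_combination heq
    obtain ⟨c', rfl⟩ := hpp.dvd_of_dvd_pow (Dvd.intro _ h1.symm)
    refine no_sol (s := p) (e := 1) (f := 1) (c := c') hab h3' (by norm_num) ?_
    apply mul_left_cancel₀ hp0; linear_combination h1
  · exfalso
    have h1 : c ^ 2 = p * (b ^ 4 + 3 * a ^ 2 * b ^ 2 + 3 * a ^ 4) := by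
      apply mul_left_cancel₀ (mul_ne_zero three_ne_zero hp0); linear_combination heq
    obtain ⟨c', rfl⟩ := hpp.dvd_of_dvd_pow (Dvd.intro _ h1.symm)
    refine no_sol (s := p) (e := 1) (f := 1) (c := c') hab.symm h3' (by norm_num) ?_
    apply mul_left_cancel₀ hp0; linear_combination h1
  all_goals omega

/-- second descent -/
lemma classE' {p : ℕ} (hp : p.Prime) (h3 : p % 3 = 2) {t w : ℚ} (ht : t ≠ 0)
    (h : t * (t ^ 2 - 6 * p * t - 3 * p ^ 2) = w ^ 2) :
    ∃ r : ℚ, t = r ^ 2 ∨ t = -3 * r ^ 2 ∨ t = -p * r ^ 2 ∨ t = 3 * p * r ^ 2 := by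
  have h3' : (p : ℤ) % 3 = 2 := by omega
  have hp0 : (p : ℤ) ≠ 0 := by exact_mod_cast hp.ne_zero
  have hpp : Prime (p : ℤ) := Nat.prime_iff_prime_int.1 hp
  have hp2 : ¬ (3 : ℤ) ∣ -(p : ℤ) ^ 2 := by
    intro h
    exact three_dvd_helper h3' (Int.prime_three.dvd_of_dvd_pow (by simpa using h))
  obtain ⟨g, a, b, c, hg, hb, hab, htg, heq⟩ :=
    rat_decomp (k := -6 * p) (l := -(3 * p ^ 2)) (w := w) hp (by simp) ht
      (by push_cast; linear_combination h)
  refine ⟨a / b, ?_⟩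
  rcases hg with rfl | rfl | rfl | rfl | rfl | rfl | rfl | rfl
  · left; rw [htg]; push_cast; ring
  · exfalso
    have hpb : IsCoprime b a := hab.symm
    have h1 : c ^ 2 = -(p : ℤ) ^ 2 * b ^ 4 - 6 * p * a ^ 2 * b ^ 2 + 3 * a ^ 4 := by
      apply mul_left_cancel₀ (three_ne_zero (α := ℤ)); linear_combination heq
    have h4 : (3 : ℤ) ∣ b ^ 4 + c ^ 2 := by
      have : b ^ 4 + c ^ 2 = (1 - (p : ℤ) ^ 2) * b ^ 4 + 3 * (- 2 * p * a ^ 2 * b ^ 2 + a ^ 4) := by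
        linear_combination h1
      rw [this]
      refine dvd_add (Dvd.dvd.mul_right ?_ _) (Dvd.intro _ rfl)
      have : (1 - (p : ℤ) ^ 2) = (p + 1) * (1 - p) := by ring
      rw [this]; exact Dvd.dvd.mul_right (by omega) _
    obtain ⟨⟨b', rfl⟩, ⟨c', rfl⟩⟩ := three_dvd_of_sq h4
    have h5 : (3 : ℤ) ∣ a ^ 4 := by
      refine ⟨c' ^ 2 + 9 * p ^ 2 * b' ^ 4 + 6 * p * a ^ 2 * b' ^ 2, ?_⟩
      linarith
    have := hab.isUnit_of_dvd' (Int.prime_three.dvd_of_dvd_pow h5)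
      (Dvd.intro _ rfl : (3 : ℤ) ∣ 3 * b')
    exact absurd this (by decide)
  · exfalso
    have h1 : c ^ 2 = p * (a ^ 4 - 6 * a ^ 2 * b ^ 2 - 3 * b ^ 4) := by
      apply mul_left_cancel₀ hp0; linear_combination heq
    obtain ⟨c', rfl⟩ := hpp.dvd_of_dvd_pow (Dvd.intro _ h1.symm)
    refine no_sol (s := p) (e := -2) (f := -1) (c := c') hab h3' (by norm_num) ?_
    apply mul_left_cancel₀ hp0; linear_combination h1
  · right; right; right; rw [htg]; push_cast; ring
  · exfalso
    refine no_sol (s := -1) (e := 2 * p) (f := -p ^ 2) (c := c) hab (by norm_num) hp2 ?_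
    linear_combination heq
  · right; left; rw [htg]; push_cast; ring
  · right; right; left; rw [htg]; push_cast; ring
  · exfalso
    have h1 : c ^ 2 = p * (b ^ 4 - 6 * a ^ 2 * b ^ 2 - 3 * a ^ 4) := by
      apply mul_left_cancel₀ (mul_ne_zero three_ne_zero hp0); linear_combination -heq
    obtain ⟨c', rfl⟩ := hpp.dvd_of_dvd_pow (Dvd.intro _ h1.symm)
    refine no_sol (s := p) (e := -2) (f := -1) (c := c') hab.symm h3' (by norm_num) ?_
    apply mul_left_cancel₀ hp0; linear_combination h1

lemma poly1 {a b s : ℚ} (hss : s ^ 2 = a ^ 2 + 2 * a * b - 2 * b ^ 2) :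
    ((s ^ 2 + s * (2 * a - b) + (a ^ 2 - a * b + b ^ 2)) * (2 * a - b)) ^ 2 =
      (2 * a ^ 2 - a * b + s * (2 * a - b)) ^ 3 - (-(b * (2 * a - b))) ^ 3 := by
  have h3 : s ^ 3 = (a ^ 2 + 2 * a * b - 2 * b ^ 2) * s := by rw [pow_succ, hss]
  have h4 : s ^ 4 = (a ^ 2 + 2 * a * b - 2 * b ^ 2) ^ 2 := by rw [← hss]; ring
  ring_nf
  rw [h4, h3, hss]
  ring

lemma poly2 {a b s : ℚ} (hss : s ^ 2 = a ^ 2 + 2 * a * b - 2 * b ^ 2) :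
    3 * (2 * a ^ 2 - a * b + s * (2 * a - b)) ^ 2 =
      (s + (2 * a - b)) * (2 * ((s ^ 2 + s * (2 * a - b) + (a ^ 2 - a * b + b ^ 2)) * (2 * a - b))) := by
  have h3 : s ^ 3 = (a ^ 2 + 2 * a * b - 2 * b ^ 2) * s := by rw [pow_succ, hss]
  ring_nf
  rw [h3, hss]
  ring

lemma poly3 {a b s : ℚ} :
    s * (a ^ 2 - a * b + b ^ 2) =
      -((s + (2 * a - b)) * (a ^ 2 - b ^ 2 - (2 * a ^ 2 - a * b + s * (2 * a - b))) +
      (s ^ 2 + s * (2 * a - b) + (a ^ 2 - a * b + b ^ 2)) * (2 * a - b)) := by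
  ring

open WeierstrassCurve.Affine in
lemma E_eq {D : ℤ} {x y : ℚ} (h : (E0twist D).Equation x y) : y ^ 2 = x ^ 3 - D ^ 3 := by
  rw [equation_iff] at h
  simp [E0twist] at h
  linear_combination h

lemma E_nonsing {D : ℤ} (hD : D ≠ 0) {x y : ℚ} (h : y ^ 2 = x ^ 3 - D ^ 3) :
    (E0twist D).Nonsingular x y := by
  have hD' : (D : ℚ) ≠ 0 := by exact_mod_cast hD
  rw [WeierstrassCurve.Affine.nonsingular_iff, WeierstrassCurve.Affine.equation_iff]
  simp only [E0twist]
  refine ⟨by linear_combination h, ?_⟩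
  by_contra hc
  push Not at hc
  obtain ⟨h1, h2⟩ := hc
  have hx : x = 0 := by
    have : x ^ 2 = 0 := by linarith
    exact pow_eq_zero_iff (two_ne_zero) |>.1 this
  have hy : y = 0 := by linarith
  subst hx hy
  exact hD' (pow_eq_zero_iff (three_ne_zero) |>.1 (by linarith))

/-- The field `ℚ(ω)` with `ω² = -1 - ω`. -/
abbrev KK := QuadraticAlgebra ℚ (-1) (-1)

instance factKK : Fact (∀ r : ℚ, r ^ 2 ≠ -1 + (-1) * r) :=
  ⟨fun r h => by nlinarith [sq_nonneg (r + 1 / 2)]⟩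

/-- The descent map `P ↦ x(P) - Dω`. -/
noncomputable def delta {D : ℤ} : (E0twist D).Point → KK
  | .zero => 1
  | .some x _ _ => ⟨x, -D⟩

lemma delta_zero {D : ℤ} : delta (0 : (E0twist D).Point) = 1 := rfl

lemma delta_some {D : ℤ} {x y : ℚ} (h : (E0twist D).Nonsingular x y) :
    delta (.some x y h) = ⟨x, -D⟩ := rfl

lemma delta_ne_zero {D : ℤ} (hD : D ≠ 0) (P : (E0twist D).Point) : delta P ≠ 0 := by
  cases P with
  | zero => exact one_ne_zero
  | some x y h =>
    intro h0
    have := congrArg QuadraticAlgebra.im h0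
    simp [delta] at this
    exact hD this

open Polynomial in
lemma delta_add {D : ℤ} (P Q : (E0twist D).Point) :
    IsSquare (delta P * delta Q * delta (P + Q)) := by
  rcases P with _ | ⟨x₁, y₁, h₁⟩
  · rw [← WeierstrassCurve.Affine.Point.zero_def, zero_add, delta_zero, one_mul]
    exact ⟨_, rfl⟩
  rcases Q with _ | ⟨x₂, y₂, h₂⟩
  · rw [← WeierstrassCurve.Affine.Point.zero_def, add_zero, delta_zero, mul_one]
    exact ⟨_, rfl⟩
  by_cases hxy : x₁ = x₂ ∧ y₁ = (E0twist D).negY x₂ y₂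
  · rw [WeierstrassCurve.Affine.Point.add_of_Y_eq hxy.1 hxy.2, delta_zero, mul_one, delta_some,
      delta_some, hxy.1]
    exact ⟨_, rfl⟩
  · rw [WeierstrassCurve.Affine.Point.add_some hxy, delta_some, delta_some, delta_some]
    have key := WeierstrassCurve.Affine.addPolynomial_slope h₁.1 h₂.1 hxy
    generalize (E0twist D).slope x₁ x₂ y₁ y₂ = ℓ at key ⊢
    generalize (E0twist D).addX x₁ x₂ ℓ = x₃ at key ⊢
    rw [WeierstrassCurve.Affine.addPolynomial_eq] at key
    have := congrArg (aeval (⟨0, D⟩ : KK)) key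
    simp [Cubic.toPoly, E0twist] at this
    refine ⟨⟨y₁ - ℓ * x₁, ℓ * D⟩, ?_⟩
    have h3 : (⟨0, D⟩ : KK) ^ 3 = ⟨D ^ 3, 0⟩ := by
      ext <;> simp [pow_succ]
    have hr := congrArg QuadraticAlgebra.re this
    have hi := congrArg QuadraticAlgebra.im this
    have e1 : (2 : KK).re = 2 := rfl
    have e2 : (2 : KK).im = 0 := rfl
    simp [pow_succ, e1, e2] at hr hi
    ext
    · simp; linear_combination -hr
    · simp; linear_combination -hi

lemma half_of_sq {D : ℤ} (hD : D ≠ 0) (P : (E0twist D).Point) (h : IsSquare (delta P)) :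
    ∃ Q : (E0twist D).Point, P = Q + Q := by
  rcases P with _ | ⟨x, y, hP⟩
  · exact ⟨0, by rw [add_zero]; rfl⟩
  obtain ⟨⟨a, b⟩, hz⟩ := h
  have hD' : (D : ℚ) ≠ 0 := by exact_mod_cast hD
  have hx := congrArg QuadraticAlgebra.re hz
  have hd := congrArg QuadraticAlgebra.im hz
  simp [delta] at hx hd
  have hE := E_eq hP.1
  set N := a ^ 2 - a * b + b ^ 2 with hN
  have hb : b ≠ 0 := by rintro rfl; simp at hd; exact hD hd
  have hN0 : 0 < N := by
    have : 0 < b ^ 2 := by positivity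
    nlinarith [sq_nonneg (a - b / 2)]
  have hm : 2 * a - b ≠ 0 := by
    intro h0
    apply hD'
    have : (D : ℚ) = - (b * (2 * a - b)) := by linear_combination -hd
    rw [this, h0]; ring
  have hy : y ^ 2 = (x - D) * N ^ 2 := by
    rw [hE, hN, hx, show (D : ℚ) = - (b * (2 * a - b)) by linear_combination -hd]; ring
  -- choose s with x - D = s² and y = s N
  set s := y / N with hs
  have hys : y = s * N := by rw [hs]; field_simp
  have hss : s ^ 2 = a ^ 2 + 2 * a * b - 2 * b ^ 2 := by
    have : s ^ 2 = x - D := by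
      rw [hs]; field_simp; linear_combination hy
    rw [this, hx, show (D : ℚ) = - (b * (2 * a - b)) by linear_combination -hd]; ring
  set m := 2 * a - b with hmm
  set u := 2 * a ^ 2 - a * b + s * m with hu
  set v := (s ^ 2 + s * m + N) * m with hv
  have hv0 : v ≠ 0 := by
    apply mul_ne_zero _ hm
    have : 0 < b ^ 2 := by positivity
    have : 0 < s ^ 2 + s * m + N := by
      rw [hN]; nlinarith [sq_nonneg (s + m / 2)]
    exact this.ne'
  have hQ : v ^ 2 = u ^ 3 - D ^ 3 := by
    rw [show (D : ℚ) = - (b * (2 * a - b)) by linear_combination -hd, hv, hu, hN, hmm]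
    exact poly1 hss
  refine ⟨.some u v (E_nonsing hD hQ), ?_⟩
  have hne : v ≠ (E0twist D).negY u v := by
    simp [WeierstrassCurve.Affine.negY, E0twist]
    intro h; apply hv0; linarith
  rw [WeierstrassCurve.Affine.Point.add_self_of_Y_ne hne]
  have hsl : (E0twist D).slope u u v v = s + m := by
    rw [WeierstrassCurve.Affine.slope_of_Y_ne rfl hne]
    simp only [WeierstrassCurve.Affine.negY, E0twist]
    rw [div_eq_iff (by intro h; apply hv0; linarith)]
    rw [hv, hu, hN, hmm]
    linear_combination poly2 hss
  have hX : x = (E0twist D).addX u u ((E0twist D).slope u u v v) := by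
    rw [hsl]
    simp only [WeierstrassCurve.Affine.addX, E0twist]
    rw [hx, hu]
    linear_combination -hss
  have hY : y = (E0twist D).addY u u v ((E0twist D).slope u u v v) := by
    rw [WeierstrassCurve.Affine.addY, WeierstrassCurve.Affine.negAddY, ← hX, hsl]
    simp only [WeierstrassCurve.Affine.negY, E0twist]
    rw [hys, hx, hv, hu, hN, hmm]
    linear_combination poly3 (a := a) (b := b) (s := s)
  simp only [WeierstrassCurve.Affine.Point.some.injEq]
  exact ⟨hX, hY⟩

/-- The `2`-torsion point `(p, 0)`. -/
noncomputable def TT {D : ℤ} (hD : D ≠ 0) : (E0twist D).Point :=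
  .some (D : ℚ) 0 (E_nonsing hD (by ring))

lemma TT_add {D : ℤ} (hD : D ≠ 0) : TT hD + TT hD = 0 := by
  unfold TT
  apply WeierstrassCurve.Affine.Point.add_self_of_Y_eq
  simp [WeierstrassCurve.Affine.negY, E0twist]

lemma norm_some {D : ℤ} {x y : ℚ} (h : (E0twist D).Nonsingular x y) :
    QuadraticAlgebra.norm (delta (.some x y h)) = x ^ 2 + D * x + D ^ 2 := by
  rw [delta_some, QuadraticAlgebra.norm_def]; simp; ring

lemma norm_class {p : ℕ} (hp : p.Prime) (h3 : p % 3 = 2) (P : (E0twist (p : ℤ)).Point) :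
    IsSquare (QuadraticAlgebra.norm (delta P)) ∨ IsSquare (3 * QuadraticAlgebra.norm (delta P)) := by
  rcases P with _ | ⟨x, y, hP⟩
  · left; rw [← WeierstrassCurve.Affine.Point.zero_def, delta_zero, map_one]; exact ⟨1, by simp⟩
  rw [norm_some]
  have hE := E_eq hP.1
  push_cast at hE ⊢
  have hp0 : (0 : ℚ) < p := by exact_mod_cast hp.pos
  have hF : 0 < x ^ 2 + p * x + p ^ 2 := by nlinarith [sq_nonneg (x + p / 2), mul_pos hp0 hp0]
  have hE2 : y ^ 2 = (x - p) * (x ^ 2 + p * x + p ^ 2) := by rw [hE]; ring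
  rcases lt_trichotomy (x - p) 0 with hX | hX | hX
  · have := mul_neg_of_neg_of_pos hX hF
    nlinarith [sq_nonneg y]
  · right
    have : x = p := by linarith
    exact ⟨3 * p, by rw [this]; ring⟩
  · rcases classE hp h3 hX (w := y) (by rw [hE2]; ring) with ⟨r, hr⟩ | ⟨r, hr⟩
    · left
      have hr0 : r ≠ 0 := by rintro rfl; simp at hr; linarith
      refine ⟨y / r, ?_⟩
      field_simp
      rw [hE2, hr]; ring
    · right
      have hr0 : r ≠ 0 := by rintro rfl; simp at hr; linarith
      refine ⟨3 * y / r, ?_⟩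
      field_simp
      linear_combination -3 * hE2 - (x ^ 2 + p * x + p ^ 2) * hr

lemma norm_TT {p : ℕ} (hp : (p : ℤ) ≠ 0) :
    QuadraticAlgebra.norm (delta (TT hp)) = 3 * (p : ℚ) ^ 2 := by
  unfold TT; rw [norm_some]; push_cast; ring

lemma norm_shift {p : ℕ} (hp : (p : ℤ) ≠ 0) (P : (E0twist (p : ℤ)).Point)
    (h : IsSquare (3 * QuadraticAlgebra.norm (delta P))) :
    IsSquare (QuadraticAlgebra.norm (delta (P + TT hp))) := by
  obtain ⟨r, hr⟩ := h
  obtain ⟨w, hw⟩ := delta_add P (TT hp)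
  have hw' := congrArg QuadraticAlgebra.norm hw
  rw [map_mul, map_mul, map_mul, norm_TT] at hw'
  have hn : QuadraticAlgebra.norm (delta P) ≠ 0 := by
    rw [Ne, QuadraticAlgebra.norm_eq_zero_iff_eq_zero]
    exact delta_ne_zero hp P
  have hp0 : (p : ℚ) ≠ 0 := by exact_mod_cast hp
  have hr0 : r ≠ 0 := by rintro rfl; simp at hr; exact hn hr
  refine ⟨QuadraticAlgebra.norm w / (r * p), ?_⟩
  field_simp
  rw [pow_two (QuadraticAlgebra.norm w), ← hw']
  linear_combination -QuadraticAlgebra.norm (delta (P + TT hp)) * p ^ 2 * hr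

/-- Points whose image is a square or `-p` times a square. -/
def GoodPt {p : ℕ} (P : (E0twist (p : ℤ)).Point) : Prop :=
  IsSquare (delta P) ∨ ∃ z : KK, delta P = -(p : KK) * z ^ 2

lemma good_of_norm {p : ℕ} (hp : p.Prime) (h3 : p % 3 = 2) (P : (E0twist (p : ℤ)).Point)
    (h : IsSquare (QuadraticAlgebra.norm (delta P))) : GoodPt P := by
  rcases P with _ | ⟨x, y, hP⟩
  · left; exact ⟨1, by rw [one_mul]; rfl⟩
  rw [norm_some] at h
  obtain ⟨v, hv⟩ := h
  have hE := E_eq hP.1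
  push_cast at hE hv
  have hp0 : (0 : ℚ) < p := by exact_mod_cast hp.pos
  have hF : 0 < x ^ 2 + p * x + p ^ 2 := by nlinarith [sq_nonneg (x + p / 2), mul_pos hp0 hp0]
  have hv0 : v ≠ 0 := by rintro rfl; simp at hv; linarith
  have hE2 : y ^ 2 = (x - p) * v ^ 2 := by rw [hE, pow_two v, ← hv]; ring
  have ht0 : 2 * x + p + 2 * v ≠ 0 := by
    intro h0
    have : (2 * x + p + 2 * v) * (2 * x + p - 2 * v) = -3 * p ^ 2 := by linear_combination 4 * hv
    rw [h0] at this
    nlinarith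
  obtain ⟨t, ht⟩ : ∃ t, t = 2 * x + p + 2 * v := ⟨_, rfl⟩
  rw [← ht] at ht0
  have hX : (y / v) ^ 2 = x - p := by field_simp; linear_combination hE2
  have hcl := classE' hp h3 ht0 (w := 2 * t * (y / v)) (by
    rw [mul_pow, hX, ht]
    linear_combination (-4 * (2 * x + p + 2 * v)) * hv)
  -- `(α + v)² = α t`
  have hα : ((⟨x, -p⟩ : KK) + ⟨v, 0⟩) ^ 2 = ⟨x, -p⟩ * ⟨t, 0⟩ := by
    rw [pow_two]
    ext
    · simp; rw [ht]; linear_combination -hv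
    · simp; rw [ht]; ring
  have hd : delta (.some x y hP) = (⟨x, -p⟩ : KK) := by rw [delta_some]; push_cast; rfl
  unfold GoodPt
  rw [hd]
  generalize (⟨x, -p⟩ : KK) = α at hα ⊢
  generalize (⟨v, 0⟩ : KK) = V at hα ⊢
  have hpK : (p : KK) ≠ 0 := by exact_mod_cast hp.ne_zero
  have htK : (⟨t, 0⟩ : KK) ≠ 0 := by
    intro h0; exact ht0 (congrArg QuadraticAlgebra.re h0)
  have k1 : ∀ z : KK, (⟨t, 0⟩ : KK) = z ^ 2 → IsSquare α := by
    intro z hz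
    have hz0 : z ≠ 0 := by rintro rfl; exact htK (by rw [hz]; ring)
    refine ⟨(α + V) / z, ?_⟩
    field_simp
    rw [hα, hz]
  have k2 : ∀ z : KK, (⟨t, 0⟩ : KK) = -(p : KK) * z ^ 2 →
      ∃ z : KK, α = -(p : KK) * z ^ 2 := by
    intro z hz
    have hz0 : z ≠ 0 := by rintro rfl; exact htK (by rw [hz]; ring)
    refine ⟨(α + V) / (p * z), ?_⟩
    field_simp
    rw [hα, hz]
    ring
  have hpc : (p : KK) = ⟨p, 0⟩ := by ext <;> simp
  obtain ⟨r, h | h | h | h⟩ := hcl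
  · left
    apply k1 ⟨r, 0⟩
    ext <;> simp [h, pow_two]
  · left
    apply k1 (⟨r, 2 * r⟩)
    ext
    · simp [h, pow_two]; ring
    · simp [pow_two]; ring
  · right
    apply k2 ⟨r, 0⟩
    rw [hpc]
    ext <;> simp [h, pow_two]
  · right
    apply k2 ⟨r, 2 * r⟩
    rw [hpc]
    ext
    · simp [h, pow_two]; ring
    · simp [pow_two]; right; ring

lemma good_or {p : ℕ} (hp : p.Prime) (h3 : p % 3 = 2) (hp0 : (p : ℤ) ≠ 0)
    (P : (E0twist (p : ℤ)).Point) : GoodPt P ∨ GoodPt (P + TT hp0) := by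
  rcases norm_class hp h3 P with h | h
  · exact Or.inl (good_of_norm hp h3 P h)
  · exact Or.inr (good_of_norm hp h3 _ (norm_shift hp0 P h))

lemma sq_of_good {p : ℕ} (hp0 : (p : ℤ) ≠ 0) (P Q : (E0twist (p : ℤ)).Point)
    (hP : ∃ z : KK, delta P = -(p : KK) * z ^ 2) (hQ : ∃ z : KK, delta Q = -(p : KK) * z ^ 2) :
    ∃ R, P + Q = R + R := by
  apply half_of_sq hp0
  obtain ⟨z, hz⟩ := hP
  obtain ⟨z', hz'⟩ := hQ
  obtain ⟨w, hw⟩ := delta_add P Q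
  have hP0 := delta_ne_zero hp0 P
  have hQ0 := delta_ne_zero hp0 Q
  have hz0 : z ≠ 0 := by rintro rfl; exact hP0 (by rw [hz]; ring)
  have hz0' : z' ≠ 0 := by rintro rfl; exact hQ0 (by rw [hz']; ring)
  have hpK : (p : KK) ≠ 0 := by exact_mod_cast hp0
  refine ⟨w / (p * z * z'), ?_⟩
  field_simp
  rw [pow_two w, ← hw, hz, hz']
  ring

lemma descent_s7 {p : ℕ} (hp : p.Prime) (h3 : p % 3 = 2) :
    ∃ T Q : (E0twist (p : ℤ)).Point, T + T = 0 ∧ ∀ P, ∃ R,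
      P = R + R ∨ P + T = R + R ∨ P + Q = R + R ∨ P + T + Q = R + R := by
  have hp0 : (p : ℤ) ≠ 0 := by exact_mod_cast hp.ne_zero
  by_cases hex : ∃ Q : (E0twist (p : ℤ)).Point, ∃ z : KK, delta Q = -(p : KK) * z ^ 2
  · obtain ⟨Q, hQ⟩ := hex
    refine ⟨TT hp0, Q, TT_add hp0, fun P => ?_⟩
    rcases good_or hp h3 hp0 P with (h | h) | (h | h)
    · obtain ⟨R, hR⟩ := half_of_sq hp0 P h
      exact ⟨R, Or.inl hR⟩
    · obtain ⟨R, hR⟩ := sq_of_good hp0 P Q h hQ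
      exact ⟨R, Or.inr (Or.inr (Or.inl hR))⟩
    · obtain ⟨R, hR⟩ := half_of_sq hp0 _ h
      exact ⟨R, Or.inr (Or.inl hR)⟩
    · obtain ⟨R, hR⟩ := sq_of_good hp0 _ Q h hQ
      exact ⟨R, Or.inr (Or.inr (Or.inr hR))⟩
  · refine ⟨TT hp0, 0, TT_add hp0, fun P => ?_⟩
    rcases good_or hp h3 hp0 P with (h | h) | (h | h)
    · obtain ⟨R, hR⟩ := half_of_sq hp0 P h
      exact ⟨R, Or.inl hR⟩
    · exact absurd ⟨_, h⟩ hex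
    · obtain ⟨R, hR⟩ := half_of_sq hp0 _ h
      exact ⟨R, Or.inr (Or.inl hR)⟩
    · exact absurd ⟨_, h⟩ hex

open WeierstrassCurve.Affine WeierstrassCurve.Affine.Point in
/-- The addition-and-subtraction map on our curve, in explicit form. -/
noncomputable def asm (D : ℤ) (x : Fin 3 → ℚ) : Fin 3 → ℚ :=
  ![x 0 ^ 2 + 4 * D ^ 3 * x 1 * x 2, 2 * x 1 * x 0 - 4 * D ^ 3 * x 2 ^ 2, x 1 ^ 2 - 4 * x 0 * x 2]

lemma asm_eq (D : ℤ) (x : Fin 3 → ℚ) :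
    (fun i => (WeierstrassCurve.addSubMap (E0twist D) i).eval x) = asm D x := by
  funext i
  fin_cases i <;>
    simp [WeierstrassCurve.addSubMap, asm, E0twist, WeierstrassCurve.b₂, WeierstrassCurve.b₄,
      WeierstrassCurve.b₆, WeierstrassCurve.b₈] <;> ring

open WeierstrassCurve.Affine.Point in
lemma asm_self {D : ℤ} (P : (E0twist D).Point) :
    ∃ c : ℚ, asm D (sym2x P P) = c • sym2x (P + P) 0 := by
  rcases P with _ | ⟨x, y, h⟩
  · refine ⟨1, ?_⟩
    rw [← zero_def, add_zero]
    simp [asm]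
  have hE := E_eq h.1
  by_cases hy : y = (E0twist D).negY x y
  · rw [add_self_of_Y_eq hy]
    have hy0 : y = 0 := by
      simp [WeierstrassCurve.Affine.negY, E0twist] at hy; linarith
    refine ⟨x ^ 4 + 8 * D ^ 3 * x, ?_⟩
    rw [hy0] at hE
    funext i
    fin_cases i <;> simp [asm]
    · ring
    · linear_combination -4 * hE
    · ring
  · rw [add_self_of_Y_ne hy]
    have hsl := WeierstrassCurve.Affine.slope_of_Y_ne rfl hy
    have hy0 : y ≠ 0 := by
      rintro rfl
      simp [WeierstrassCurve.Affine.negY, E0twist] at hy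
    have hX : (E0twist D).addX x x ((E0twist D).slope x x y y) = (3 * x ^ 2 / (2 * y)) ^ 2 - 2 * x := by
      rw [hsl]
      simp [WeierstrassCurve.Affine.addX, WeierstrassCurve.Affine.negY, E0twist]
      ring
    refine ⟨4 * y ^ 2, ?_⟩
    simp only [sym2x_some_some, sym2x_some_zero, hX]
    funext i
    fin_cases i <;> simp [asm]
    · field_simp
      linear_combination 32 * x * hE
    · linear_combination -4 * hE
    · ring

open WeierstrassCurve.Affine.Point in
lemma asm_sym2x {D : ℤ} (P Q : (E0twist D).Point) :
    ∃ c : ℚ, asm D (sym2x P Q) = c • sym2x (P + Q) (P - Q) := by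
  rcases P with _ | ⟨x₁, y₁, h₁⟩
  · rw [← zero_def, zero_add, zero_sub, sym2x_neg_right]
    refine ⟨1, ?_⟩
    rcases Q with _ | ⟨x₂, y₂, h₂⟩
    · rw [← zero_def]
      simp [asm]
    · simp [asm]
      constructor <;> ring
  rcases Q with _ | ⟨x₂, y₂, h₂⟩
  · rw [← zero_def, add_zero, sub_zero]
    refine ⟨1, ?_⟩
    simp [asm]
    constructor <;> ring
  have hE₁ := E_eq h₁.1
  have hE₂ := E_eq h₂.1
  by_cases hx : x₁ = x₂
  · rcases X_eq_iff.mp hx with h | h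
    · rw [h, sub_self]
      exact asm_self _
    · have : some x₂ y₂ h₂ = - some x₁ y₁ h₁ := by rw [h, neg_neg]
      rw [this, sym2x_neg_right, add_neg_cancel, sub_neg_eq_add, sym2x_comm 0]
      exact asm_self _
  · have hd : x₁ - x₂ ≠ 0 := sub_ne_zero.mpr hx
    refine ⟨(x₁ - x₂) ^ 2, ?_⟩
    rw [sub_eq_add_neg (some x₁ y₁ h₁), neg_some, add_of_X_ne hx, add_of_X_ne hx]
    simp only [sym2x_some_some]
    rw [WeierstrassCurve.Affine.slope_of_X_ne hx, WeierstrassCurve.Affine.slope_of_X_ne hx]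
    have e1 : (E0twist D).addX x₁ x₂ ((y₁ - y₂) / (x₁ - x₂)) =
      ((y₁ - y₂) / (x₁ - x₂)) ^ 2 - x₁ - x₂ := by
      simp [WeierstrassCurve.Affine.addX, E0twist]
    have e2 : (E0twist D).addX x₁ x₂ ((y₁ - (E0twist D).negY x₂ y₂) / (x₁ - x₂)) =
      ((y₁ + y₂) / (x₁ - x₂)) ^ 2 - x₁ - x₂ := by
      simp [WeierstrassCurve.Affine.addX, WeierstrassCurve.Affine.negY, E0twist]
    rw [e1, e2]
    funext i
    fin_cases i <;> simp [asm]
    · field_simp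
      linear_combination -(y₁ ^ 2 - y₂ ^ 2 + x₁ ^ 3 - x₂ ^ 3) * (hE₁ - hE₂) +
        2 * (x₁ + x₂) * (x₁ - x₂) ^ 2 * (hE₁ + hE₂)
    · field_simp
      linear_combination -2 * (hE₁ + hE₂)
    · ring

lemma E_elliptic {D : ℤ} (hD : D ≠ 0) : (E0twist D).IsElliptic := by
  have hD' : (D : ℚ) ≠ 0 := by exact_mod_cast hD
  refine ⟨?_⟩
  have : (E0twist D).Δ = -(432 * (D : ℚ) ^ 6) := by
    simp [WeierstrassCurve.Δ, E0twist, WeierstrassCurve.b₂, WeierstrassCurve.b₄,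
      WeierstrassCurve.b₆, WeierstrassCurve.b₈]
    ring
  rw [this]
  exact IsUnit.mk0 _ (by simpa using hD)

/-- Naive height. -/
noncomputable def nh {D : ℤ} (P : (E0twist D).Point) : ℝ := Height.logHeight P.xRep

lemma nh_sym2 (D : ℤ) : ∃ C : ℝ, ∀ P Q : (E0twist D).Point,
    |Height.logHeight (P.sym2x Q) - (nh P + nh Q)| ≤ C := by
  obtain ⟨C, hC⟩ := Height.abs_logHeight_sym2_sub_le ℚ
  refine ⟨C, fun P Q => ?_⟩
  unfold nh
  have key : ∀ R : (E0twist D).Point, ∃ a b : ℚ, R.xRep = ![a, b] ∧ ![a, b] ≠ 0 := by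
    intro R
    refine ⟨R.xRep 0, R.xRep 1, ?_, ?_⟩
    · ext i; fin_cases i <;> rfl
    · have := R.xRep_ne_zero
      intro h0
      apply this
      rw [← h0]
      ext i; fin_cases i <;> rfl
  have e : P.sym2x Q = ![P.xRep 0 * Q.xRep 0, P.xRep 0 * Q.xRep 1 + P.xRep 1 * Q.xRep 0,
      P.xRep 1 * Q.xRep 1] := by
    rcases P with _ | ⟨x₁, y₁, h₁⟩ <;> rcases Q with _ | ⟨x₂, y₂, h₂⟩ <;>
      simp [← WeierstrassCurve.Affine.Point.zero_def]
  obtain ⟨a, b, h1, h2⟩ := key P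
  obtain ⟨c, d, h3, h4⟩ := key Q
  rw [e, h1, h3]
  exact hC h2 h4

lemma nh_parallelogram {D : ℤ} (hD : D ≠ 0) : ∃ C : ℝ, ∀ P Q : (E0twist D).Point,
    |nh (P + Q) + nh (P - Q) - 2 * (nh P + nh Q)| ≤ C := by
  have := E_elliptic hD
  obtain ⟨C₁, h₁⟩ := nh_sym2 D
  obtain ⟨C₂, h₂⟩ :=
    WeierstrassCurve.abs_logHeight_addSubMap_sub_two_mul_logHeight_le (E0twist D)
  refine ⟨C₁ + 2 * C₁ + C₂, fun P Q => ?_⟩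
  have a1 := h₁ (P + Q) (P - Q)
  have a2 := h₁ P Q
  have a3 := h₂ (P.sym2x Q)
  have hne := WeierstrassCurve.addSubMap_ne_zero (E0twist D) (P.sym2x_ne_zero Q)
  obtain ⟨c, hc⟩ := asm_sym2x P Q
  rw [asm_eq, hc] at hne a3
  have hc0 : c ≠ 0 := by rintro rfl; simp at hne
  rw [Height.logHeight_smul_eq_logHeight _ hc0] at a3
  rw [abs_le] at *
  constructor <;> linarith [a1.1, a1.2, a2.1, a2.2, a3.1, a3.2]

instance nh_northcott (D : ℤ) : Northcott (nh (D := D)) where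
  finite_le := by
    intro B
    have hfin : {x : ℚ | Height.logHeight₁ x ≤ B}.Finite :=
      Northcott.finite_le (h := Height.logHeight₁ (K := ℚ)) B
    have hfin2 : (insert ![1, 0] ((fun x : ℚ => ![x, 1]) '' {x : ℚ | Height.logHeight₁ x ≤ B})).Finite :=
      (hfin.image _).insert _
    refine Set.Finite.subset (Set.Finite.preimage' (f := fun P : (E0twist D).Point => P.xRep) hfin2 ?_) ?_
    · intro b _
      by_cases hb : ∃ P : (E0twist D).Point, P.xRep = b
      · obtain ⟨P, rfl⟩ := hb
        refine Set.Finite.subset (Set.toFinite {P, -P}) ?_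
        intro Q hQ
        exact WeierstrassCurve.Affine.Point.eq_or_eq_neg_of_xRep_eq_xRep hQ
      · convert Set.finite_empty
        ext Q
        simp only [Set.mem_preimage, Set.mem_singleton_iff, Set.mem_empty_iff_false, iff_false]
        exact fun h => hb ⟨Q, h⟩
    · intro P hP
      rcases P with _ | ⟨x, y, h⟩
      · left; rfl
      · right
        refine ⟨x, ?_, rfl⟩
        have : nh (.some x y h : (E0twist D).Point) ≤ B := hP
        show Height.logHeight₁ x ≤ B
        rw [Height.logHeight₁_eq_logHeight]
        exact this

lemma E_fg {p : ℕ} (hp : p.Prime) (h3 : p % 3 = 2) : AddGroup.FG (E0twist (p : ℤ)).Point := by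
  have hp0 : (p : ℤ) ≠ 0 := by exact_mod_cast hp.ne_zero
  obtain ⟨C, hC⟩ := nh_parallelogram hp0
  obtain ⟨T, Q, -, hd⟩ := descent_s7 hp h3
  refine AddCommGroup.fg_of_descent' (h := nh) ?_ (fun P => Height.logHeight_nonneg _) hC
  rw [AddSubgroup.finiteIndex_iff_finite_quotient]
  refine Set.finite_univ_iff.mp (Set.Finite.subset (Set.toFinite
    {QuotientAddGroup.mk (0 : (E0twist (p : ℤ)).Point), QuotientAddGroup.mk (-T), QuotientAddGroup.mk (-Q),
      QuotientAddGroup.mk (-(T + Q))}) ?_)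
  rintro q -
  obtain ⟨P, rfl⟩ := QuotientAddGroup.mk_surjective q
  obtain ⟨R, hR⟩ := hd P
  simp only [Set.mem_insert_iff, Set.mem_singleton_iff]
  have key : ∀ S : (E0twist (p : ℤ)).Point, P + S = R + R →
      (QuotientAddGroup.mk P : _ ⧸ (nsmulAddMonoidHom (α := (E0twist (p : ℤ)).Point) 2).range) =
        QuotientAddGroup.mk (-S) := by
    intro S hS
    rw [QuotientAddGroup.eq]
    refine ⟨-R, ?_⟩
    simp only [nsmulAddMonoidHom_apply, two_nsmul]
    rw [← neg_add, ← neg_add, hS]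
  rcases hR with h | h | h | h
  · left; rw [key 0 (by rw [add_zero, h]), neg_zero]
  · right; left; exact key T h
  · right; right; left; exact key Q h
  · right; right; right; exact key (T + Q) (by rw [← add_assoc, h])

lemma rank_le_of {G : Type*} [AddCommGroup G] [AddGroup.FG G] (T Q : G) (hT : T + T = 0)
    (hd : ∀ P : G, ∃ R, P = R + R ∨ P + T = R + R ∨ P + Q = R + R ∨ P + T + Q = R + R) :
    Module.rank ℚ (ℚ ⊗[ℤ] G) ≤ 1 := by
  have : Module.Finite ℤ G := Module.Finite.iff_addGroup_fg.mpr inferInstance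
  let N : Submodule ℤ G := Submodule.span ℤ {T, Q}
  have hTN : T ∈ N := Submodule.subset_span (by simp)
  have hQN : Q ∈ N := Submodule.subset_span (by simp)
  have h1 : (⊤ : Submodule ℤ (G ⧸ N)) ≤ (Ideal.span {(2 : ℤ)}) • (⊤ : Submodule ℤ (G ⧸ N)) := by
    rintro q -
    obtain ⟨P, rfl⟩ := Submodule.mkQ_surjective N q
    obtain ⟨R, hR⟩ := hd P
    have : ∃ S ∈ N, P + S = (2 : ℤ) • R := by
      rw [two_smul]
      rcases hR with h | h | h | h
      · exact ⟨0, N.zero_mem, by rw [add_zero, h]⟩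
      · exact ⟨T, hTN, h⟩
      · exact ⟨Q, hQN, h⟩
      · exact ⟨T + Q, N.add_mem hTN hQN, by rw [← add_assoc, h]⟩
    obtain ⟨S, hS, hPS⟩ := this
    have : N.mkQ P = (2 : ℤ) • N.mkQ R := by
      rw [← map_smul, ← hPS, map_add]
      simp [hS]
    rw [this]
    exact Submodule.smul_mem_smul (Ideal.subset_span rfl) trivial
  obtain ⟨r, hr, hr0⟩ := Submodule.exists_sub_one_mem_and_smul_eq_zero_of_fg_of_le_smul
    (Ideal.span {(2 : ℤ)}) (⊤ : Submodule ℤ (G ⧸ N)) Module.Finite.fg_top h1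
  have hrne : r ≠ 0 := by
    rintro rfl
    rw [Ideal.mem_span_singleton] at hr
    omega
  have hmem : ∀ P : G, r • P ∈ N := by
    intro P
    have := hr0 (N.mkQ P) trivial
    rw [← map_smul] at this
    exact (Submodule.Quotient.mk_eq_zero N).mp this
  have hmul : ∀ P : G, ∃ k : ℤ, (2 * r) • P = k • Q := by
    intro P
    obtain ⟨a, b, hab⟩ := Submodule.mem_span_pair.mp (hmem P)
    refine ⟨2 * b, ?_⟩
    rw [mul_smul, ← hab, smul_add, smul_comm, two_smul ℤ T, hT, smul_zero, zero_add, mul_smul]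
  have hspan : Submodule.span ℚ {(1 : ℚ) ⊗ₜ[ℤ] Q} = ⊤ := by
    rw [eq_top_iff]
    rintro x -
    induction x using TensorProduct.induction_on with
    | zero => exact Submodule.zero_mem _
    | add x y hx hy => exact Submodule.add_mem _ hx hy
    | tmul a P =>
      obtain ⟨k, hk⟩ := hmul P
      rw [Submodule.mem_span_singleton]
      have hq : ((2 * r : ℤ) : ℚ) ≠ 0 := by exact_mod_cast (mul_ne_zero two_ne_zero hrne)
      refine ⟨a / ((2 * r : ℤ) : ℚ) * k, ?_⟩
      rw [TensorProduct.smul_tmul', smul_eq_mul, mul_one]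
      have e1 : a = (2 * r) • (a / ((2 * r : ℤ) : ℚ)) := by
        rw [zsmul_eq_mul]; field_simp
      have e2 : a / ((2 * r : ℤ) : ℚ) * k = k • (a / ((2 * r : ℤ) : ℚ)) := by
        rw [zsmul_eq_mul]; ring
      conv_rhs => rw [e1]
      rw [e2, TensorProduct.smul_tmul, TensorProduct.smul_tmul, hk]
  rw [← rank_top, ← hspan]
  exact (rank_span_le _).trans (by simp)

/-- **Main theorem.** For a prime `p ≡ 5` or `11 (mod 12)`, the rank of
`y² = x³ − p³` over `ℚ` is at most `1`. -/
theorem prime_twist_rank_le_one (p : ℕ) (hp : p.Prime)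
    (hcong : p % 12 = 5 ∨ p % 12 = 11) :
    mwRank (E0twist (p : ℤ)) ≤ 1 := by
  have h3 : p % 3 = 2 := by omega
  have := E_fg hp h3
  obtain ⟨T, Q, hT, hd⟩ := descent_s7 hp h3
  exact rank_le_of T Q hT hd
end
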